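/- arXiv:1703.09378 — 5 statements merged into one kernel-verified Lean document; each statement's English description precedes it below -/
import Mathlib

section
/- For all integers k ≥ 3 and 2 ≤ t ≤ k−1, the graph C_{2k−1}^{ct} obtained from a cycle C of length 2k−1 by adding a chord between two vertices at distance t on C satisfies cc_k(C_{2k−1}^{ct}) = 2k − t. -/
open SimpleGraph

/-- `c` is a `k`-color connecting edge-coloring of `G`: between every pair of distinct
vertices there is a path whose edges use at least `k` different colors. -/
def SimpleGraph.IsKColorConnecting {V : Type*} (G : SimpleGraph V) (k : ℕ)
    (c : Sym2 V → ℕ) : Prop :=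
  ∀ u v : V, u ≠ v → ∃ p : G.Walk u v, p.IsPath ∧ k ≤ (p.edges.map c).toFinset.card

/-- `G` is `k`-color connectable: it admits a `k`-color connecting coloring. -/
def SimpleGraph.KColorConnectable {V : Type*} (G : SimpleGraph V) (k : ℕ) : Prop :=
  ∃ c : Sym2 V → ℕ, G.IsKColorConnecting k c

/-- The `k`-color connection number `cc_k(G)`: the minimum number of colors used on the
edges of `G` by a `k`-color connecting coloring. -/
noncomputable def SimpleGraph.ccConn {V : Type*} (G : SimpleGraph V) (k : ℕ) : ℕ :=
  sInf {n : ℕ | ∃ c : Sym2 V → ℕ, G.IsKColorConnecting k c ∧ (c '' G.edgeSet).ncard = n}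

/-- The cycle of length `n` together with one extra chord joining vertex `0` and
vertex `t` (which are at distance `t` along the cycle when `t ≤ n - t`). -/
def chordedCycle (n t : ℕ) (h0 : 0 < n) (ht : t < n) : SimpleGraph (Fin n) :=
  cycleGraph n ⊔ SimpleGraph.fromEdgeSet {s((⟨0, h0⟩ : Fin n), (⟨t, ht⟩ : Fin n))}


open SimpleGraph

namespace CC

lemma avoid {V : Type*} {G : SimpleGraph V} (I : Set V) (u v : V)
    (hI : ∀ a ∈ I, ∀ b, G.Adj a b → b ∈ I ∨ b = u ∨ b = v) {a b : V} (p : G.Walk a b) :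
    b = v → p.IsPath → a ∉ I → u ∉ p.support → ∀ w ∈ p.support, w ∉ I := by
  induction p with
  | nil => intro _ _ ha _ w hw; simp at hw; subst hw; exact ha
  | @cons a x b h q ih =>
    intro hb hp ha hu w hw
    rw [Walk.cons_isPath_iff] at hp
    simp only [Walk.support_cons, List.mem_cons, not_or] at hu hw
    rcases hw with rfl | hw
    · exact ha
    · refine ih hb hp.1 ?_ hu.2 w hw
      intro hx
      rcases hI x hx a h.symm with h1 | h1 | h1
      · exact ha h1
      · exact hu.1 h1.symm
      · subst h1; subst hb; exact hp.2 q.end_mem_support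

lemma touch {V : Type*} {G : SimpleGraph V} (I : Set V) (u v : V) (hv : v ∉ I)
    (hI : ∀ a ∈ I, ∀ b, G.Adj a b → b ∈ I ∨ b = u ∨ b = v) {a b : V} (p : G.Walk a b) :
    b = v → p.IsPath → a ∈ I → u ∉ p.support → ∀ e ∈ p.edges, ∃ w ∈ I, w ∈ e := by
  induction p with
  | nil => intro _ _ _ _ e he; simp at he
  | @cons a x b h q ih =>
    intro hb hp ha hu e he
    rw [Walk.cons_isPath_iff] at hp
    simp only [Walk.support_cons, List.mem_cons, not_or, Walk.edges_cons] at hu he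
    rcases he with rfl | he
    · exact ⟨a, ha, by simp⟩
    · rcases hI a ha x h with h1 | h1 | h1
      · exact ih hb hp.1 h1 hu.2 e he
      · subst h1; exact absurd q.start_mem_support hu.2
      · subst h1; subst hb
        have := hp.1
        rw [Walk.isPath_iff_nil, ← Walk.eq_nil_iff_nil] at this
        subst this; simp at he

lemma dichotomy {V : Type*} {G : SimpleGraph V} (I : Set V) (u v : V) (hu : u ∉ I) (hv : v ∉ I)
    (hI : ∀ a ∈ I, ∀ b, G.Adj a b → b ∈ I ∨ b = u ∨ b = v) (p : G.Walk u v) (hp : p.IsPath) :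
    (∀ e ∈ p.edges, ∃ w ∈ I, w ∈ e) ∨ (∀ w ∈ p.support, w ∉ I) := by
  cases p with
  | nil => left; intro e he; simp at he
  | @cons _ x _ h q =>
    rw [Walk.cons_isPath_iff] at hp
    by_cases hx : x ∈ I
    · left
      intro e he
      simp only [Walk.edges_cons, List.mem_cons] at he
      rcases he with rfl | he
      · exact ⟨x, hx, by simp⟩
      · exact touch I u v hv hI q rfl hp.1 hx hp.2 e he
    · right
      intro w hw
      simp only [Walk.support_cons, List.mem_cons] at hw
      rcases hw with rfl | hw
      · exact hu
      · exact avoid I u v hI q rfl hp.1 hx hp.2 w hw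

lemma start_edge {V : Type*} {G : SimpleGraph V} {u v : V} (p : G.Walk u v) (huv : u ≠ v) (x : V)
    (h : ∀ b ∈ p.support, G.Adj u b → b = x) : s(u, x) ∈ p.edges := by
  cases p with
  | nil => exact absurd rfl huv
  | @cons _ y _ hy q =>
    have := h y (by simp) hy
    subst this; simp

lemma mid_edge {V : Type*} {G : SimpleGraph V} (w x y : V)
    (h : ∀ b, G.Adj w b → b = x ∨ b = y) {u v : V} (p : G.Walk u v) :
    p.IsPath → w ∈ p.support → w ≠ u → w ≠ v → s(w, x) ∈ p.edges ∧ s(w, y) ∈ p.edges := by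
  induction p with
  | nil => intro _ hw h1; simp at hw; exact absurd hw h1
  | @cons a z b hz q ih =>
    intro hp hw h1 h2
    rw [Walk.cons_isPath_iff] at hp
    simp only [Walk.support_cons, List.mem_cons] at hw
    have hw := hw.resolve_left h1
    by_cases hwz : w = z
    · subst hwz
      cases q with
      | nil => exact absurd rfl h2
      | @cons _ z' _ hz' q' =>
        have hne : a ≠ z' := by
          rintro rfl
          apply hp.2; simp
        have e1 := h a hz.symm
        have e2 := h z' hz'
        simp only [Walk.edges_cons, List.mem_cons]
        rcases e1 with rfl | rfl <;> rcases e2 with rfl | rfl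
        · exact absurd rfl hne
        · exact ⟨Or.inl Sym2.eq_swap, by simp⟩
        · exact ⟨by simp, Or.inl Sym2.eq_swap⟩
        · exact absurd rfl hne
    · have := ih hp.1 hw hwz h2
      simp [this]

lemma build {V : Type*} (G : SimpleGraph V) (l : ℕ) : ∀ (g : ℕ → V)
    (_ : ∀ i < l, G.Adj (g i) (g (i+1)))
    (_ : ∀ i ≤ l, ∀ j ≤ l, g i = g j → i = j),
    ∃ p : G.Walk (g 0) (g l), p.IsPath ∧ (∀ w ∈ p.support, ∃ i ≤ l, w = g i) ∧
      ∀ i < l, s(g i, g (i+1)) ∈ p.edges := by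
  induction l with
  | zero => intro g _ _; exact ⟨Walk.nil, by simp, by simp, by simp⟩
  | succ l ih =>
    intro g h1 h2
    obtain ⟨p, hp, hs, he⟩ := ih (fun i => g (i+1)) (fun i hi => h1 (i+1) (by omega))
      (fun i hi j hj h => by have := h2 (i+1) (by omega) (j+1) (by omega) h; omega)
    refine ⟨Walk.cons (h1 0 (by omega)) p, ?_, ?_, ?_⟩
    · rw [Walk.cons_isPath_iff]
      refine ⟨hp, fun hm => ?_⟩
      obtain ⟨i, hi, h⟩ := hs _ hm
      have := h2 0 (by omega) (i+1) (by omega) h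
      omega
    · intro w hw
      simp only [Walk.support_cons, List.mem_cons] at hw
      rcases hw with rfl | hw
      · exact ⟨0, by omega, rfl⟩
      · obtain ⟨i, hi, h⟩ := hs _ hw
        exact ⟨i+1, by omega, h⟩
    · intro i hi
      rcases i with _ | i
      · simp
      · simp only [Walk.edges_cons, List.mem_cons]
        right; exact he i (by omega)

/-- Combinatorial counting at the heart of the lower bound. -/
lemma counting (k t n : ℕ) (hk : 3 ≤ k) (ht2 : 2 ≤ t) (htk : t ≤ k - 1) (hn : n = 2 * k - 1)
    (f : ℕ → ℕ)
    (h1 : ∀ u, t ≤ u → u + k ≤ n → ∀ i j, u ≤ i → i < j → j < u + k → f i ≠ f j)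
    (h2 : ∀ u, t ≤ u → u + (k - 1) ≤ n → ∀ i j, i < j → j < n →
      (i < u ∨ u + (k-1) ≤ i) → (j < u ∨ u + (k-1) ≤ j) → f i ≠ f j) :
    2 * k - t ≤ ((Finset.range n).image f).card := by
  have hB : ∀ i j, t ≤ i → i < j → j < n → f i ≠ f j := by
    intro i j hi hij hj
    by_cases hd : j - i < k
    · by_cases hc : i ≤ n - k
      · exact h1 i (by omega) (by omega) i j (by omega) hij (by omega)
      · exact h1 (n - k) (by omega) (by omega) i j (by omega) hij (by omega)
    · exact h2 (i+1) (by omega) (by omega) i j hij hj (by omega) (by omega)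
  have hBi : Set.InjOn f (Finset.Ico t n : Finset ℕ) := by
    intro i hi j hj h
    simp only [Finset.coe_Ico, Set.mem_Ico] at hi hj
    rcases lt_trichotomy i j with h' | h' | h'
    · exact absurd h (hB i j hi.1 h' hj.2)
    · exact h'
    · exact absurd h.symm (hB j i hj.1 h' hi.2)
  have hAi : Set.InjOn f (Finset.range t : Finset ℕ) := by
    intro i hi j hj h
    simp only [Finset.coe_range, Set.mem_Iio] at hi hj
    rcases lt_trichotomy i j with h' | h' | h'
    · exact absurd h (h2 t le_rfl (by omega) i j h' (by omega) (by omega) (by omega))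
    · exact h'
    · exact absurd h.symm (h2 t le_rfl (by omega) j i h' (by omega) (by omega) (by omega))
  have hex : ∃ i < t, ∀ j, t ≤ j → j < n → f j ≠ f i := by
    by_contra hcon
    push Not at hcon
    have hsub : (Finset.range t).image f ⊆ (Finset.Ico k (t + k - 1)).image f := by
      intro y hy
      simp only [Finset.mem_image, Finset.mem_range] at hy
      obtain ⟨i, hi, rfl⟩ := hy
      obtain ⟨j, hj1, hj2, hj⟩ := hcon i hi
      simp only [Finset.mem_image, Finset.mem_Ico]
      refine ⟨j, ⟨?_, ?_⟩, hj⟩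
      · by_contra hlt
        exact h2 k (by omega) (by omega) i j (by omega) hj2 (by omega) (by omega) hj.symm
      · by_contra hlt
        exact h2 t (by omega) (by omega) i j (by omega) hj2 (by omega) (by omega) hj.symm
    have h3 := Finset.card_le_card hsub
    rw [Finset.card_image_of_injOn hAi] at h3
    have h4 := h3.trans Finset.card_image_le
    simp at h4
    omega
  obtain ⟨i, hi, hij⟩ := hex
  have hnot : f i ∉ (Finset.Ico t n).image f := by
    simp only [Finset.mem_image, Finset.mem_Ico, not_exists, not_and]
    intro j hj; exact hij j hj.1 hj.2
  have hsub : insert (f i) ((Finset.Ico t n).image f) ⊆ (Finset.range n).image f := by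
    intro y hy
    simp only [Finset.mem_insert, Finset.mem_image, Finset.mem_Ico, Finset.mem_range] at hy ⊢
    rcases hy with rfl | ⟨j, hj, rfl⟩
    · exact ⟨i, by omega, rfl⟩
    · exact ⟨j, by omega, rfl⟩
  have h5 := Finset.card_le_card hsub
  rw [Finset.card_insert_of_notMem hnot, Finset.card_image_of_injOn hBi] at h5
  simp at h5
  omega

lemma adj_iff (n t : ℕ) (h0 : 0 < n) (ht : t < n) (hn : 3 ≤ n) (ht0 : 0 < t) (a b : Fin n) :
    (chordedCycle n t h0 ht).Adj a b ↔
      (a.val + 1 = b.val ∨ b.val + 1 = a.val ∨ (a.val = 0 ∧ b.val = n - 1) ∨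
        (b.val = 0 ∧ a.val = n - 1) ∨ (a.val = 0 ∧ b.val = t) ∨ (a.val = t ∧ b.val = 0)) := by
  have hab : (cycleGraph n).Adj a b ↔ (a.val + 1 = b.val ∨ b.val + 1 = a.val ∨
      (a.val = 0 ∧ b.val = n - 1) ∨ (b.val = 0 ∧ a.val = n - 1)) := by
    rw [cycleGraph_adj']
    have h1 := a.isLt
    have h2 := b.isLt
    have e1 := @Fin.coe_sub_iff_le n a b
    have e2 := @Fin.coe_sub_iff_lt n a b
    have e3 := @Fin.coe_sub_iff_le n b a
    have e4 := @Fin.coe_sub_iff_lt n b a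
    simp only [Fin.le_def, Fin.lt_def] at *
    omega
  unfold chordedCycle
  rw [sup_adj, hab, fromEdgeSet_adj]
  simp only [Set.mem_singleton_iff, Sym2.eq_iff, Fin.ext_iff, ne_eq]
  omega


/-- The vertex `j mod n`. -/
def vtx (n : ℕ) (h0 : 0 < n) (j : ℕ) : Fin n := ⟨j % n, Nat.mod_lt _ h0⟩

/-- The cycle edge from `j` to `j + 1`. -/
def edg (n : ℕ) (h0 : 0 < n) (j : ℕ) : Sym2 (Fin n) := s(vtx n h0 j, vtx n h0 (j + 1))

lemma vtx_val (n : ℕ) (h0 : 0 < n) (j : ℕ) (hj : j ≤ n) :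
    ((vtx n h0 j).val = j ∧ j < n) ∨ ((vtx n h0 j).val = 0 ∧ j = n) := by
  rcases hj.lt_or_eq with h | h
  · left; exact ⟨Nat.mod_eq_of_lt h, h⟩
  · right; subst h; exact ⟨Nat.mod_self _, rfl⟩

lemma edg_eq (n : ℕ) (h0 : 0 < n) (j : ℕ) (hj : j < n) (a b : Fin n)
    (h : (a.val = j ∧ (b.val = j + 1 ∨ (j + 1 = n ∧ b.val = 0))) ∨
      (b.val = j ∧ (a.val = j + 1 ∨ (j + 1 = n ∧ a.val = 0)))) : s(a, b) = edg n h0 j := by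
  have h1 := vtx_val n h0 j hj.le
  have h2 := vtx_val n h0 (j + 1) hj
  have := a.isLt
  have := b.isLt
  unfold edg
  rw [Sym2.eq_iff]
  simp only [Fin.ext_iff]
  omega

lemma edg_inj (n : ℕ) (h0 : 0 < n) (hn : 3 ≤ n) (i j : ℕ) (hi : i < n) (hj : j < n)
    (h : edg n h0 i = edg n h0 j) : i = j := by
  have h1 := vtx_val n h0 j hj.le
  have h2 := vtx_val n h0 (j + 1) hj
  have h3 := vtx_val n h0 i hi.le
  have h4 := vtx_val n h0 (i + 1) hi
  unfold edg at h
  rw [Sym2.eq_iff] at h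
  simp only [Fin.ext_iff] at h
  omega


lemma split (t n : ℕ) (h0 : 0 < n) (ht : t < n)
    (u d : ℕ) (hn3 : 3 ≤ n) (ht0 : 0 < t) (hu : t ≤ u) (hd : u + d ≤ n) (hd1 : 1 ≤ d)
    (p : (chordedCycle n t h0 ht).Walk (vtx n h0 u) (vtx n h0 (u + d))) (hp : p.IsPath) :
    (∀ e ∈ p.edges, ∃ j, u ≤ j ∧ j < u + d ∧ e = edg n h0 j) ∨
    (∀ w ∈ p.support, ¬ (u < w.val ∧ w.val < u + d)) := by
  have h1 := vtx_val n h0 u (by omega)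
  have h2 := vtx_val n h0 (u + d) hd
  have key := dichotomy (G := chordedCycle n t h0 ht) {w : Fin n | u < w.val ∧ w.val < u + d}
    (vtx n h0 u) (vtx n h0 (u + d)) (by simp only [Set.mem_ofPred_eq]; omega)
    (by simp only [Set.mem_ofPred_eq]; omega)
    (by
      intro a ha b hab
      rw [adj_iff n t h0 ht hn3 ht0] at hab
      simp only [Set.mem_ofPred_eq, Fin.ext_iff] at ha ⊢
      omega) p hp
  rcases key with key | key
  · left
    intro e he
    obtain ⟨w, hw, hwe⟩ := key e he
    obtain ⟨b, rfl⟩ := Sym2.mem_iff_exists.1 hwe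
    have hab := p.adj_of_mem_edges he
    rw [adj_iff n t h0 ht hn3 ht0] at hab
    simp only [Set.mem_ofPred_eq] at hw
    have := b.isLt
    by_cases hb : b.val + 1 = w.val
    · exact ⟨b.val, by omega, by omega, edg_eq n h0 _ (by omega) _ _ (by omega)⟩
    · exact ⟨w.val, by omega, by omega, edg_eq n h0 _ (by omega) _ _ (by omega)⟩
  · right
    exact key

lemma supp_sub (n : ℕ)
    (u d : ℕ) (hd : u + d ≤ n) (hd1 : 1 ≤ d) (s : Finset (Fin n))
    (h : ∀ w ∈ s, ¬ (u < w.val ∧ w.val < u + d)) : s.card + d ≤ n + 1 ∧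
    (s.card + d = n + 1 → ∀ w : Fin n, ¬ (u < w.val ∧ w.val < u + d) → w ∈ s) := by
  have himg : s.image Fin.val ⊆ Finset.range n \ Finset.Ico (u + 1) (u + d) := by
    intro y hy
    simp only [Finset.mem_image] at hy
    obtain ⟨w, hw, rfl⟩ := hy
    have := h w hw
    have := w.isLt
    simp only [Finset.mem_sdiff, Finset.mem_range, Finset.mem_Ico]
    omega
  have hc1 : (s.image Fin.val).card = s.card :=
    Finset.card_image_of_injective _ Fin.val_injective
  have hc2 : (Finset.range n \ Finset.Ico (u + 1) (u + d)).card = n - (d - 1) := by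
    rw [Finset.card_sdiff_of_subset]
    · simp; omega
    · intro y; simp only [Finset.mem_range, Finset.mem_Ico]; omega
  have := Finset.card_le_card himg
  refine ⟨by omega, fun hE w hw => ?_⟩
  have heq := Finset.eq_of_subset_of_card_le himg (by omega)
  have hmem : w.val ∈ s.image Fin.val := by
    rw [heq]
    have := w.isLt
    simp only [Finset.mem_sdiff, Finset.mem_range, Finset.mem_Ico]
    omega
  simp only [Finset.mem_image] at hmem
  obtain ⟨w', hw', h'⟩ := hmem
  rwa [← Fin.ext h']

lemma inj_of_card (n : ℕ) (h0 : 0 < n)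
    (c : Sym2 (Fin n) → ℕ) (S : Finset ℕ) (l : List (Sym2 (Fin n)))
    (h : ∀ e ∈ l, ∃ j ∈ S, e = edg n h0 j) (hc : S.card ≤ (l.map c).toFinset.card) :
    Set.InjOn (fun j => c (edg n h0 j)) S := by
  rw [← Finset.card_image_iff]
  apply le_antisymm Finset.card_image_le
  refine hc.trans (Finset.card_le_card ?_)
  intro y hy
  simp only [List.mem_toFinset, List.mem_map] at hy
  obtain ⟨e, he, rfl⟩ := hy
  obtain ⟨j, hj, rfl⟩ := h e he
  exact Finset.mem_image.2 ⟨j, hj, rfl⟩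

lemma colors_le_length {V : Type*} (c : Sym2 V → ℕ) (l : List (Sym2 V)) :
    (l.map c).toFinset.card ≤ l.length :=
  (List.toFinset_card_le _).trans (by simp)

lemma supp_card {V : Type*} [DecidableEq V] {G : SimpleGraph V} {u v : V} (p : G.Walk u v)
    (hp : p.IsPath) : p.support.toFinset.card = p.edges.length + 1 := by
  rw [List.toFinset_card_of_nodup hp.support_nodup]
  simp

lemma window1 (k t n : ℕ) (hk : 3 ≤ k) (ht2 : 2 ≤ t) (hn : n = 2 * k - 1) (h0 : 0 < n) (ht : t < n)
    (c : Sym2 (Fin n) → ℕ) (hc : (chordedCycle n t h0 ht).IsKColorConnecting k c)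
    (u : ℕ) (hu : t ≤ u) (hd : u + k ≤ n) :
    Set.InjOn (fun j => c (edg n h0 j)) (Finset.Ico u (u + k) : Finset ℕ) := by
  have h1 := vtx_val n h0 u (by omega)
  have h2 := vtx_val n h0 (u + k) hd
  obtain ⟨p, hp, hcard⟩ := hc (vtx n h0 u) (vtx n h0 (u + k)) (by
    rw [Ne, Fin.ext_iff]; omega)
  rcases split t n h0 ht u k (by omega) (by omega) hu hd (by omega) p hp with h | h
  · apply inj_of_card n h0 c _ p.edges
    · intro e he
      obtain ⟨j, a, b, e⟩ := h e he
      exact ⟨j, by simp [a, b], e⟩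
    · simpa using hcard
  · have := colors_le_length c p.edges
    have h3 := supp_card p hp
    have h4 := (supp_sub n u k hd (by omega) p.support.toFinset (by simpa using h)).1
    omega

lemma window2 (k t n : ℕ) (hk : 3 ≤ k) (ht2 : 2 ≤ t) (htk : t ≤ k - 1) (hn : n = 2 * k - 1) (h0 : 0 < n) (ht : t < n)
    (c : Sym2 (Fin n) → ℕ) (hc : (chordedCycle n t h0 ht).IsKColorConnecting k c)
    (u : ℕ) (hu : t ≤ u) (hd : u + (k - 1) ≤ n) :
    Set.InjOn (fun j => c (edg n h0 j))
      (Finset.range n \ Finset.Ico u (u + (k - 1)) : Finset ℕ) := by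
  have h1 := vtx_val n h0 u (by omega)
  have h2 := vtx_val n h0 (u + (k - 1)) hd
  have huv : vtx n h0 u ≠ vtx n h0 (u + (k - 1)) := by rw [Ne, Fin.ext_iff]; omega
  obtain ⟨p, hp, hcard⟩ := hc _ _ huv
  have hlen := colors_le_length c p.edges
  rcases split t n h0 ht u (k - 1) (by omega) (by omega) hu hd (by omega) p hp with h | h
  · exfalso
    have hsub : (p.edges.map c).toFinset ⊆
        (Finset.Ico u (u + (k - 1))).image (fun j => c (edg n h0 j)) := by
      intro y hy
      simp only [List.mem_toFinset, List.mem_map] at hy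
      obtain ⟨e, he, rfl⟩ := hy
      obtain ⟨j, a, b, rfl⟩ := h e he
      exact Finset.mem_image.2 ⟨j, by simp [a, b], rfl⟩
    have h3 := (Finset.card_le_card hsub).trans Finset.card_image_le
    simp at h3
    omega
  have hsc := supp_card p hp
  obtain ⟨h4, h5⟩ := supp_sub n u (k - 1) hd (by omega) p.support.toFinset (by simpa using h)
  have hall := h5 (by omega)
  simp only [List.mem_toFinset] at hall
  set S := Finset.range n \ Finset.Ico u (u + (k - 1)) with hS
  have hScard : S.card = k := by
    rw [hS, Finset.card_sdiff_of_subset]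
    · simp; omega
    · intro y; simp only [Finset.mem_range, Finset.mem_Ico]; omega
  have hmid : ∀ j, 0 < j → j < n → j ≠ t → (j < u ∨ u + (k - 1) < j) →
      edg n h0 (j - 1) ∈ p.edges ∧ edg n h0 j ∈ p.edges := by
    intro j hj0 hjn hjt hj
    have e1 := vtx_val n h0 j (by omega)
    have e2 := vtx_val n h0 (j - 1) (by omega)
    have e3 := vtx_val n h0 (j + 1) (by omega)
    have := mid_edge (G := chordedCycle n t h0 ht) (vtx n h0 j) (vtx n h0 (j - 1))
      (vtx n h0 (j + 1)) (by
        intro b hb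
        rw [adj_iff n t h0 ht (by omega) (by omega)] at hb
        simp only [Fin.ext_iff]
        omega) p hp (hall _ (by omega)) (by rw [Ne, Fin.ext_iff]; omega)
      (by rw [Ne, Fin.ext_iff]; omega)
    rw [edg_eq n h0 (j - 1) (by omega) _ _ (by omega), edg_eq n h0 j (by omega) _ _ (by omega)]
      at this
    exact this
  have hin : ∀ j ∈ S, edg n h0 j ∈ p.edges := by
    intro j hj
    simp only [hS, Finset.mem_sdiff, Finset.mem_range, Finset.mem_Ico] at hj
    have e1 := vtx_val n h0 j (by omega)
    have e3 := vtx_val n h0 (j + 1) (by omega)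
    by_cases c1 : j < t
    · by_cases c2 : j = 0
      · subst c2
        exact (hmid 1 (by omega) (by omega) (by omega) (by omega)).1
      · exact (hmid j (by omega) (by omega) (by omega) (by omega)).2
    by_cases c2 : j + 1 < u
    · exact (hmid (j + 1) (by omega) (by omega) (by omega) (by omega)).1
    by_cases c3 : j + 1 = u
    · have := start_edge p huv (vtx n h0 j) (by
        intro b hb hab
        have := h b hb
        rw [adj_iff n t h0 ht (by omega) (by omega)] at hab
        rw [Fin.ext_iff]
        omega)
      rwa [edg_eq n h0 j (by omega) _ _ (by omega)] at this
    by_cases c4 : j = u + (k - 1)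
    · have := start_edge p.reverse huv.symm (vtx n h0 (j + 1)) (by
        intro b hb hab
        have := h b (by simpa using hb)
        rw [adj_iff n t h0 ht (by omega) (by omega)] at hab
        rw [Fin.ext_iff]
        omega)
      rw [edg_eq n h0 j (by omega) _ _ (by omega)] at this
      simpa using this
    · exact (hmid j (by omega) (by omega) (by omega) (by omega)).2
  have hSi : Set.InjOn (edg n h0) S := by
    intro i hi j hj hij
    simp only [hS, Finset.coe_sdiff, Finset.coe_range, Set.mem_sdiff, Set.mem_Iio] at hi hj
    exact edg_inj n h0 (by omega) i j hi.1 hj.1 hij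
  have hsub : S.image (edg n h0) ⊆ p.edges.toFinset := by
    intro e he
    obtain ⟨j, hj, rfl⟩ := Finset.mem_image.1 he
    exact List.mem_toFinset.2 (hin j hj)
  have heq := Finset.eq_of_subset_of_card_le hsub (by
    rw [Finset.card_image_of_injOn hSi, hScard]
    have := List.toFinset_card_le p.edges
    omega)
  apply inj_of_card n h0 c _ p.edges
  · intro e he
    rw [← List.mem_toFinset, ← heq] at he
    obtain ⟨j, hj, rfl⟩ := Finset.mem_image.1 he
    exact ⟨j, hj, rfl⟩
  · omega

lemma lower (k t n : ℕ) (hk : 3 ≤ k) (ht2 : 2 ≤ t) (htk : t ≤ k - 1) (hn : n = 2 * k - 1) (h0 : 0 < n) (ht : t < n)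
    (c : Sym2 (Fin n) → ℕ) (hc : (chordedCycle n t h0 ht).IsKColorConnecting k c) :
    2 * k - t ≤ (c '' (chordedCycle n t h0 ht).edgeSet).ncard := by
  have h := counting k t n hk ht2 htk hn (fun j => c (edg n h0 j))
    (by
      intro u hu hd i j hi hij hj h
      have := window1 k t n hk ht2 hn h0 ht c hc u hu hd (by simp; omega) (by simp; omega) h
      omega)
    (by
      intro u hu hd i j hij hjn hi hj h
      have := window2 k t n hk ht2 htk hn h0 ht c hc u hu hd (by simp; omega) (by simp; omega) h
      omega)
  refine h.trans ?_
  rw [← Set.ncard_coe_finset]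
  apply Set.ncard_le_ncard _ (Set.toFinite _)
  intro y hy
  simp only [Finset.coe_image, Finset.coe_range, Set.mem_image, Set.mem_Iio] at hy
  obtain ⟨j, hj, rfl⟩ := hy
  refine ⟨_, ?_, rfl⟩
  have e1 := vtx_val n h0 j (by omega)
  have e3 := vtx_val n h0 (j + 1) (by omega)
  unfold edg
  rw [mem_edgeSet, adj_iff n t h0 ht (by omega) (by omega)]
  omega


/-- Color of the `j`-th cycle edge in the optimal coloring. -/
def col (k t j : ℕ) : ℕ :=
  if j < t - 1 then k - 2 - j else if j = t - 1 then 2 * k - 1 - t else j - t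

/-- Color of the edge with smaller endpoint `a` and larger endpoint `b`. -/
def colPair (k t n a b : ℕ) : ℕ :=
  if b = a + 1 then col k t a else if a = 0 ∧ b = n - 1 then col k t (n - 1) else 2 * k - 1 - t

/-- The optimal coloring. -/
def coloring (k t n : ℕ) : Sym2 (Fin n) → ℕ :=
  Sym2.lift ⟨fun a b => colPair k t n (min a.val b.val) (max a.val b.val), by
    intro a b; dsimp only; rw [min_comm, max_comm]⟩

/-- There is a path from `u` to `v` with at least `k` colors. -/
def Good {V : Type*} (G : SimpleGraph V) (k : ℕ) (c : Sym2 V → ℕ) (u v : V) : Prop :=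
  ∃ p : G.Walk u v, p.IsPath ∧ k ≤ (p.edges.map c).toFinset.card

lemma Good.symm {V : Type*} {G : SimpleGraph V} {k : ℕ} {c : Sym2 V → ℕ} {u v : V}
    (h : Good G k c u v) : Good G k c v u := by
  obtain ⟨p, hp, hc⟩ := h
  refine ⟨p.reverse, hp.reverse, ?_⟩
  have : (p.reverse.edges.map c).toFinset = (p.edges.map c).toFinset := by
    ext y; simp
  rwa [this]

lemma good_of {V : Type*} (G : SimpleGraph V) (k : ℕ) (c : Sym2 V → ℕ) (l : ℕ) (g : ℕ → V)
    (h1 : ∀ i < l, G.Adj (g i) (g (i+1)))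
    (h2 : ∀ i ≤ l, ∀ j ≤ l, g i = g j → i = j) (S : Finset ℕ) (hS : k ≤ S.card)
    (h : ∀ s ∈ S, ∃ i < l, c s(g i, g (i+1)) = s) : Good G k c (g 0) (g l) := by
  obtain ⟨p, hp, -, he⟩ := build G l g h1 h2
  refine ⟨p, hp, hS.trans (Finset.card_le_card ?_)⟩
  intro s hs
  obtain ⟨i, hi, rfl⟩ := h s hs
  simp only [List.mem_toFinset, List.mem_map]
  exact ⟨_, he i hi, rfl⟩



lemma coloring_up (k t n : ℕ)
    (a b : Fin n) (h : a.val + 1 = b.val) :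
    coloring k t n s(a, b) = col k t a.val ∧ coloring k t n s(b, a) = col k t a.val := by
  rw [Sym2.eq_swap (a := b)]
  simp only [coloring, Sym2.lift_mk, colPair, and_self]
  rw [if_pos (by omega)]
  congr 1; omega


lemma coloring_last (k t n : ℕ) (hk : 3 ≤ k) (hn : n = 2 * k - 1)
    (a b : Fin n) (h : a.val = 0) (h' : b.val = n - 1) :
    coloring k t n s(a, b) = col k t (n - 1) ∧ coloring k t n s(b, a) = col k t (n - 1) := by
  rw [Sym2.eq_swap (a := b)]
  simp only [coloring, Sym2.lift_mk, colPair, and_self]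
  rw [if_neg (by omega), if_pos (by omega)]

lemma coloring_chord (k t n : ℕ) (hk : 3 ≤ k) (ht2 : 2 ≤ t) (htk : t ≤ k - 1) (hn : n = 2 * k - 1)
    (a b : Fin n) (h : a.val = 0) (h' : b.val = t) :
    coloring k t n s(a, b) = 2 * k - 1 - t ∧ coloring k t n s(b, a) = 2 * k - 1 - t := by
  rw [Sym2.eq_swap (a := b)]
  simp only [coloring, Sym2.lift_mk, colPair, and_self]
  rw [if_neg (by omega), if_neg (by omega)]

lemma coloring_edg (k t n : ℕ) (hk : 3 ≤ k) (ht2 : 2 ≤ t) (htk : t ≤ k - 1) (hn : n = 2 * k - 1) (h0 : 0 < n)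
    (j : ℕ) (hj : j < n) : coloring k t n (edg n h0 j) = col k t j := by
  have e1 := vtx_val n h0 j (by omega)
  have e3 := vtx_val n h0 (j + 1) (by omega)
  unfold edg
  by_cases h : j + 1 = n
  · rw [(coloring_last k t n hk hn _ _ (by omega) (by omega)).2]
    congr 1; omega
  · rw [(coloring_up k t n _ _ (by omega)).1]
    congr 1; omega

lemma vtx_mod (n : ℕ) (h0 : 0 < n)
    (j : ℕ) : vtx n h0 (j % n) = vtx n h0 j := by
  simp [vtx]

lemma edg_mod (n : ℕ) (h0 : 0 < n)
    (j : ℕ) : edg n h0 (j % n) = edg n h0 j := by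
  simp [edg, vtx]

lemma good_cyc (k t n : ℕ) (hk : 3 ≤ k) (ht2 : 2 ≤ t) (htk : t ≤ k - 1) (hn : n = 2 * k - 1) (h0 : 0 < n) (ht : t < n)
    (s l : ℕ) (hl : l < n) (S : Finset ℕ) (hS : k ≤ S.card)
    (h : ∀ y ∈ S, ∃ j, s ≤ j ∧ j < s + l ∧ col k t (j % n) = y) :
    Good (chordedCycle n t h0 ht) k (coloring k t n) (vtx n h0 s) (vtx n h0 (s + l)) := by
  refine good_of _ k _ l (fun i => vtx n h0 (s + i)) ?_ ?_ S hS ?_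
  · intro i _
    have hm := Nat.mod_lt (s + i) h0
    have e1 := vtx_val n h0 ((s + i) % n) hm.le
    have e3 := vtx_val n h0 ((s + i) % n + 1) hm
    have e4 : vtx n h0 ((s + i) % n + 1) = vtx n h0 (s + (i + 1)) := by
      simp [vtx, add_assoc]
    rw [vtx_mod] at e1
    rw [e4] at e3
    rw [adj_iff n t h0 ht (by omega) (by omega)]
    omega
  · intro i hi j hj hij
    simp only [vtx, Fin.mk.injEq] at hij
    have : i ≡ j [MOD n] := Nat.ModEq.add_left_cancel' s hij
    have := this.eq_of_lt_of_lt (by omega) (by omega)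
    exact this
  · intro y hy
    obtain ⟨j, hj1, hj2, hj⟩ := h y hy
    refine ⟨j - s, by omega, ?_⟩
    have : s(vtx n h0 (s + (j - s)), vtx n h0 (s + (j - s + 1))) = edg n h0 (j % n) := by
      rw [edg_mod, edg, ← add_assoc, Nat.add_sub_cancel' hj1]
    rw [this, coloring_edg k t n hk ht2 htk hn h0 _ (Nat.mod_lt _ h0), hj]

/-- Same as `good_cyc`, with the color indices split into before and after wrapping. -/
lemma good_cyc' (k t n : ℕ) (hk : 3 ≤ k) (ht2 : 2 ≤ t) (htk : t ≤ k - 1) (hn : n = 2 * k - 1) (h0 : 0 < n) (ht : t < n)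
    (s l : ℕ) (hs : s ≤ n) (hl : l < n) (S : Finset ℕ) (hS : k ≤ S.card)
    (h : ∀ y ∈ S, ∃ j < n, ((s ≤ j ∧ j < s + l) ∨ (j + n < s + l)) ∧ col k t j = y) :
    Good (chordedCycle n t h0 ht) k (coloring k t n) (vtx n h0 s) (vtx n h0 (s + l)) := by
  refine good_cyc k t n hk ht2 htk hn h0 ht s l hl S hS ?_
  intro y hy
  obtain ⟨j, hjn, hj, h⟩ := h y hy
  rcases hj with hj | hj
  · exact ⟨j, hj.1, hj.2, by rw [Nat.mod_eq_of_lt hjn, h]⟩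
  · exact ⟨j + n, by omega, hj, by rw [Nat.add_mod_right, Nat.mod_eq_of_lt hjn, h]⟩

lemma col_B (k t : ℕ)
    (j : ℕ) (h : t ≤ j) (ht2 : 2 ≤ t) : col k t j = j - t := by
  unfold col; rw [if_neg (by omega), if_neg (by omega)]

lemma col_A (k t : ℕ)
    (j : ℕ) (h : j < t - 1) : col k t j = k - 2 - j := by
  unfold col; rw [if_pos h]

lemma col_N (k t : ℕ)
    (ht2 : 2 ≤ t) : col k t (t - 1) = 2 * k - 1 - t := by
  unfold col; rw [if_neg (by omega), if_pos rfl]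

lemma good_BB (k t n : ℕ) (hk : 3 ≤ k) (ht2 : 2 ≤ t) (htk : t ≤ k - 1) (hn : n = 2 * k - 1) (h0 : 0 < n) (ht : t < n)
    (a b : ℕ) (ha : t ≤ a) (hab : a < b) (hb : b ≤ n) :
    Good (chordedCycle n t h0 ht) k (coloring k t n) (vtx n h0 a) (vtx n h0 b) := by
  by_cases hd : k ≤ b - a
  · have := good_cyc' k t n hk ht2 htk hn h0 ht a (b - a) (by omega) (by omega)
      (Finset.Ico (a - t) (b - t)) (by simp; omega) (by
        intro y hy
        simp only [Finset.mem_Ico] at hy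
        exact ⟨y + t, by omega, by omega, by rw [col_B _ _ _ (by omega) ht2]; omega⟩)
    rwa [Nat.add_sub_cancel' hab.le] at this
  · apply Good.symm
    obtain ⟨a', b', ha', hb', hta, hbn, hab'⟩ : ∃ a' b', a' ≤ a ∧ b ≤ b' ∧ t ≤ a' ∧ b' ≤ n ∧
        b' = a' + (k - 1) := by
      by_cases h : a + (k - 1) ≤ n
      · exact ⟨a, a + (k - 1), by omega, by omega, by omega, by omega, rfl⟩
      · exact ⟨n - (k - 1), n, by omega, by omega, by omega, by omega, by omega⟩
    have := good_cyc' k t n hk ht2 htk hn h0 ht b (n + a - b) (by omega) (by omega)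
      (Finset.range (2 * k - t) \ (Finset.Ico (a' - t) (k - t) ∪ Finset.Ico (k - 1) (b' - t)))
      (by
        have h1 := Finset.le_card_sdiff (Finset.Ico (a' - t) (k - t) ∪ Finset.Ico (k - 1) (b' - t))
          (Finset.range (2 * k - t))
        have h2 := Finset.card_union_le (Finset.Ico (a' - t) (k - t)) (Finset.Ico (k - 1) (b' - t))
        simp only [Finset.card_range, Nat.card_Ico] at h1 h2
        omega)
      (by
        intro y hy
        simp only [Finset.mem_Ico, Finset.mem_sdiff, Finset.mem_union, Finset.mem_range] at hy
        by_cases c1 : y = 2 * k - 1 - t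
        · exact ⟨t - 1, by omega, by omega, by rw [col_N _ _ ht2]; omega⟩
        by_cases c2 : k - t ≤ y ∧ y < k - 1
        · exact ⟨k - 2 - y, by omega, by omega, by rw [col_A _ _ _ (by omega)]; omega⟩
        · exact ⟨y + t, by omega, by omega, by rw [col_B _ _ _ (by omega) ht2]; omega⟩)
    have e : vtx n h0 (b + (n + a - b)) = vtx n h0 a := by
      rw [show b + (n + a - b) = a + n by omega]; simp [vtx]
    rwa [e] at this

lemma good_AA (k t n : ℕ) (hk : 3 ≤ k) (ht2 : 2 ≤ t) (htk : t ≤ k - 1) (hn : n = 2 * k - 1) (h0 : 0 < n) (ht : t < n)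
    (a b : ℕ) (hab : a < b) (hb : b ≤ t) :
    Good (chordedCycle n t h0 ht) k (coloring k t n) (vtx n h0 a) (vtx n h0 b) := by
  apply Good.symm
  have := good_cyc' k t n hk ht2 htk hn h0 ht b (n + a - b) (by omega) (by omega)
    (Finset.range (2 * k - 1 - t)) (by simp; omega) (by
      intro y hy
      simp only [Finset.mem_range] at hy
      exact ⟨y + t, by omega, by omega, by rw [col_B _ _ _ (by omega) ht2]; omega⟩)
  have e : vtx n h0 (b + (n + a - b)) = vtx n h0 a := by
    rw [show b + (n + a - b) = a + n by omega]; simp [vtx]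
  rwa [e] at this

lemma good_AB (k t n : ℕ) (hk : 3 ≤ k) (ht2 : 2 ≤ t) (htk : t ≤ k - 1) (hn : n = 2 * k - 1) (h0 : 0 < n) (ht : t < n)
    (x w : ℕ) (hx : 0 < x) (hxt : x < t) (hw : t < w) (hwn : w < n) :
    Good (chordedCycle n t h0 ht) k (coloring k t n) (vtx n h0 x) (vtx n h0 w) := by
  by_cases c1 : t + k ≤ w
  · have := good_cyc' k t n hk ht2 htk hn h0 ht x (w - x) (by omega) (by omega)
      (Finset.range (w - t)) (by simp; omega) (by
        intro y hy
        simp only [Finset.mem_range] at hy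
        exact ⟨y + t, by omega, by omega, by rw [col_B _ _ _ (by omega) ht2]; omega⟩)
    rwa [Nat.add_sub_cancel' (by omega)] at this
  by_cases c2 : w + k ≤ n
  · apply Good.symm
    have := good_cyc' k t n hk ht2 htk hn h0 ht w (n + x - w) (by omega) (by omega)
      (Finset.Ico (w - t) (n - t)) (by simp; omega) (by
        intro y hy
        simp only [Finset.mem_Ico] at hy
        exact ⟨y + t, by omega, by omega, by rw [col_B _ _ _ (by omega) ht2]; omega⟩)
    have e : vtx n h0 (w + (n + x - w)) = vtx n h0 x := by
      rw [show w + (n + x - w) = x + n by omega]; simp [vtx]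
    rwa [e] at this
  by_cases c3 : k - 1 ≤ x + (w - t)
  · -- down from `x` to `0`, over the chord, then up from `t` to `w`
    have hG := good_of (chordedCycle n t h0 ht) k (coloring k t n) (x + 1 + (w - t))
      (fun i => vtx n h0 (if i ≤ x then x - i else t + (i - x - 1)))
      (by
        intro i hi
        have e1 := vtx_val n h0 (if i ≤ x then x - i else t + (i - x - 1)) (by split_ifs <;> omega)
        have e2 := vtx_val n h0 (if i + 1 ≤ x then x - (i + 1) else t + (i + 1 - x - 1))
          (by split_ifs <;> omega)
        rw [adj_iff n t h0 ht (by omega) (by omega)]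
        split_ifs at e1 e2 ⊢ <;> omega)
      (by
        intro i hi j hj hij
        have e1 := vtx_val n h0 (if i ≤ x then x - i else t + (i - x - 1)) (by split_ifs <;> omega)
        have e2 := vtx_val n h0 (if j ≤ x then x - j else t + (j - x - 1))
          (by split_ifs <;> omega)
        rw [Fin.ext_iff] at hij
        split_ifs at e1 e2 hij <;> omega)
      (insert (2 * k - 1 - t) (Finset.range (k - 1)))
      (by rw [Finset.card_insert_of_notMem (by simp; omega)]; simp; omega)
      (by
        intro y hy
        simp only [Finset.mem_insert, Finset.mem_range] at hy
        by_cases d1 : y = 2 * k - 1 - t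
        · refine ⟨x, by omega, ?_⟩
          have e1 := vtx_val n h0 0 (by omega)
          have e2 := vtx_val n h0 t (by omega)
          have := (coloring_chord k t n hk ht2 htk hn (vtx n h0 0) (vtx n h0 t)
            (by omega) (by omega)).1
          simp [this, d1]
        by_cases d2 : y < w - t
        · refine ⟨x + 1 + y, by omega, ?_⟩
          rw [if_neg (by omega), if_neg (by omega), show x + 1 + y - x - 1 = y by omega,
            show t + (x + 1 + y + 1 - x - 1) = t + y + 1 by omega]
          have := coloring_edg k t n hk ht2 htk hn h0 (t + y) (by omega)
          rw [edg] at this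
          rw [this, col_B _ _ _ (by omega) ht2]; omega
        · refine ⟨x - 1 - (k - 2 - y), by omega, ?_⟩
          rw [if_pos (by omega), if_pos (by omega), Sym2.eq_swap,
            show x - (x - 1 - (k - 2 - y) + 1) = k - 2 - y by omega,
            show x - (x - 1 - (k - 2 - y)) = k - 2 - y + 1 by omega]
          have := coloring_edg k t n hk ht2 htk hn h0 (k - 2 - y) (by omega)
          rw [edg] at this
          rw [this, col_A _ _ _ (by omega)]; omega)
    have e1 : (if x + 1 + (w - t) ≤ x then x - (x + 1 + (w - t))
        else t + (x + 1 + (w - t) - x - 1)) = w := by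
      rw [if_neg (by omega)]; omega
    rw [e1] at hG
    simpa using hG
  · -- up from `x` to `t`, over the chord, then down from `n` to `w`
    have hG := good_of (chordedCycle n t h0 ht) k (coloring k t n) (t - x + 1 + (n - w))
      (fun i => vtx n h0 (if i ≤ t - x then x + i else n - (i - (t - x) - 1)))
      (by
        intro i hi
        have e1 := vtx_val n h0 (if i ≤ t - x then x + i else n - (i - (t - x) - 1))
          (by split_ifs <;> omega)
        have e2 := vtx_val n h0 (if i + 1 ≤ t - x then x + (i + 1) else n - (i + 1 - (t - x) - 1))
          (by split_ifs <;> omega)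
        rw [adj_iff n t h0 ht (by omega) (by omega)]
        split_ifs at e1 e2 ⊢ <;> omega)
      (by
        intro i hi j hj hij
        have e1 := vtx_val n h0 (if i ≤ t - x then x + i else n - (i - (t - x) - 1))
          (by split_ifs <;> omega)
        have e2 := vtx_val n h0 (if j ≤ t - x then x + j else n - (j - (t - x) - 1))
          (by split_ifs <;> omega)
        rw [Fin.ext_iff] at hij
        split_ifs at e1 e2 hij <;> omega)
      (Finset.Ico (k - t) (2 * k - t))
      (by simp; omega)
      (by
        intro y hy
        simp only [Finset.mem_Ico] at hy
        by_cases d1 : y = 2 * k - 1 - t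
        · refine ⟨t - x, by omega, ?_⟩
          have e1 := vtx_val n h0 n (by omega)
          have e2 := vtx_val n h0 t (by omega)
          have := (coloring_chord k t n hk ht2 htk hn (vtx n h0 n) (vtx n h0 t)
            (by omega) (by omega)).2
          rw [if_pos (by omega), if_neg (by omega), Nat.add_sub_cancel' hxt.le,
            show n - (t - x + 1 - (t - x) - 1) = n by omega, this, d1]
        by_cases d2 : w - t ≤ y
        · refine ⟨t - x + 1 + (n - 1 - (y + t)), by omega, ?_⟩
          rw [if_neg (by omega), if_neg (by omega), Sym2.eq_swap,
            show n - (t - x + 1 + (n - 1 - (y + t)) + 1 - (t - x) - 1) = y + t by omega,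
            show n - (t - x + 1 + (n - 1 - (y + t)) - (t - x) - 1) = y + t + 1 by omega]
          have := coloring_edg k t n hk ht2 htk hn h0 (y + t) (by omega)
          rw [edg] at this
          rw [this, col_B _ _ _ (by omega) ht2]; omega
        · refine ⟨k - 2 - y - x, by omega, ?_⟩
          rw [if_pos (by omega), if_pos (by omega),
            show x + (k - 2 - y - x) = k - 2 - y by omega,
            show x + (k - 2 - y - x + 1) = k - 2 - y + 1 by omega]
          have := coloring_edg k t n hk ht2 htk hn h0 (k - 2 - y) (by omega)
          rw [edg] at this
          rw [this, col_A _ _ _ (by omega)]; omega)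
    have e1 : (if t - x + 1 + (n - w) ≤ t - x then x + (t - x + 1 + (n - w))
        else n - (t - x + 1 + (n - w) - (t - x) - 1)) = w := by
      rw [if_neg (by omega)]; omega
    rw [e1] at hG
    simpa using hG

lemma connecting (k t n : ℕ) (hk : 3 ≤ k) (ht2 : 2 ≤ t) (htk : t ≤ k - 1) (hn : n = 2 * k - 1) (h0 : 0 < n) (ht : t < n)
    : (chordedCycle n t h0 ht).IsKColorConnecting k (coloring k t n) := by
  have main : ∀ a b : ℕ, a < b → b < n →
      Good (chordedCycle n t h0 ht) k (coloring k t n) (vtx n h0 a) (vtx n h0 b) := by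
    intro a b hab hb
    by_cases c1 : b ≤ t
    · exact good_AA k t n hk ht2 htk hn h0 ht a b hab c1
    by_cases c2 : t ≤ a
    · exact good_BB k t n hk ht2 htk hn h0 ht a b c2 hab hb.le
    by_cases c3 : a = 0
    · subst c3
      have := (good_BB k t n hk ht2 htk hn h0 ht b n (by omega) hb le_rfl).symm
      have e : vtx n h0 n = vtx n h0 0 := by simp [vtx]
      rwa [e] at this
    · exact good_AB k t n hk ht2 htk hn h0 ht a b (by omega) (by omega) (by omega) hb
  intro u v huv
  have hvu : ∀ w : Fin n, vtx n h0 w.val = w := fun w => Fin.ext (Nat.mod_eq_of_lt w.isLt)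
  rcases lt_or_gt_of_ne (fun h => huv (Fin.ext h) : u.val ≠ v.val) with h | h
  · have := main u.val v.val h v.isLt
    rwa [hvu, hvu] at this
  · have := (main v.val u.val h u.isLt).symm
    rwa [hvu, hvu] at this

lemma upper (k t n : ℕ) (hk : 3 ≤ k) (ht2 : 2 ≤ t) (htk : t ≤ k - 1) (hn : n = 2 * k - 1) (h0 : 0 < n) (ht : t < n)
    : (coloring k t n '' (chordedCycle n t h0 ht).edgeSet).ncard ≤ 2 * k - t := by
  have hsub : coloring k t n '' (chordedCycle n t h0 ht).edgeSet ⊆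
      (Finset.range (2 * k - t) : Finset ℕ) := by
    rintro _ ⟨e, -, rfl⟩
    induction e with | _ a b => ?_
    have := a.isLt
    have := b.isLt
    simp only [Finset.coe_range, Set.mem_Iio, coloring, Sym2.lift_mk, colPair, col]
    split_ifs <;> omega
  have := Set.ncard_le_ncard hsub (Finset.finite_toSet _)
  rwa [Set.ncard_coe_finset, Finset.card_range] at this


end CC

theorem stmt_1 (k t : ℕ) (hk : 3 ≤ k) (ht2 : 2 ≤ t) (htk : t ≤ k - 1) :
    (chordedCycle (2 * k - 1) t (by omega) (by omega)).KColorConnectable k ∧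
    (chordedCycle (2 * k - 1) t (by omega) (by omega)).ccConn k = 2 * k - t := by
  have hcon := CC.connecting k t (2 * k - 1) hk ht2 htk rfl (by omega) (by omega)
  refine ⟨⟨_, hcon⟩, ?_⟩
  have hup := CC.upper k t (2 * k - 1) hk ht2 htk rfl (by omega) (by omega)
  unfold SimpleGraph.ccConn
  apply le_antisymm
  · refine le_trans (Nat.sInf_le ?_) hup
    exact ⟨_, hcon, rfl⟩
  · apply le_csInf
    · exact ⟨_, _, hcon, rfl⟩
    · rintro m ⟨c, hc, rfl⟩
      exact CC.lower k t (2 * k - 1) hk ht2 htk rfl (by omega) (by omega) c hc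
end

section
/- Let G be a finite connected simple graph whose blocks are B_1, B_2, …, B_t, and let k ≥ 2. Then G is k-color connectable if and only if every block B_i is k-color connectable, and in that case cc_k(G) = max_{1 ≤ i ≤ t} cc_k(B_i). -/
open SimpleGraph

/-- A graph is 2-connected if it has at least 3 vertices, is connected, and remains
connected after deleting any single vertex. -/
def SimpleGraph.IsTwoConnected {V : Type*} (G : SimpleGraph V) : Prop :=
  3 ≤ Nat.card V ∧ G.Connected ∧ ∀ v : V, (G.induce {v}ᶜ).Connected

/-- A subgraph that is 2-connected or a single edge. -/
def SimpleGraph.IsBlockPiece {V : Type*} (G : SimpleGraph V) (B : G.Subgraph) : Prop :=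
  B.coe.IsTwoConnected ∨ ∃ u v : V, u ≠ v ∧ B.verts = {u, v} ∧ B.Adj u v

/-- A block of `G`: a maximal subgraph that is 2-connected or a single edge. -/
def SimpleGraph.IsBlock {V : Type*} (G : SimpleGraph V) (B : G.Subgraph) : Prop :=
  G.IsBlockPiece B ∧ ∀ B' : G.Subgraph, G.IsBlockPiece B' → B ≤ B' → B = B'

/-- The graph on `V` whose edges are those of `B` avoiding `S`. -/
def avoidGraph {V : Type*} {G : SimpleGraph V} (B : G.Subgraph) (S : Set V) : SimpleGraph V where
  Adj a b := B.Adj a b ∧ a ∉ S ∧ b ∉ S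
  symm := ⟨fun _ _ h => ⟨h.1.symm, h.2.2, h.2.1⟩⟩
  loopless := ⟨fun _ h => h.1.ne rfl⟩

theorem avoidGraph_mono {V : Type*} {G : SimpleGraph V} {B C : G.Subgraph} (h : B ≤ C)
    (S : Set V) : avoidGraph B S ≤ avoidGraph C S :=
  fun _ _ hab => ⟨h.2 hab.1, hab.2⟩

/-- Uniform version of "2-connected or a single edge". -/
def GoodSub {V : Type*} {G : SimpleGraph V} (B : G.Subgraph) : Prop :=
  B.verts.Nontrivial ∧ ∀ S : Set V, S.Subsingleton → ∀ a ∈ B.verts, ∀ b ∈ B.verts,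
    a ∉ S → b ∉ S → (avoidGraph B S).Reachable a b

theorem reach_coe {V : Type*} {G : SimpleGraph V} {B : G.Subgraph} {S : Set V} {a b : V}
    (w : (avoidGraph B S).Walk a b) (ha : a ∈ B.verts) (hb : b ∈ B.verts) :
    B.coe.Reachable ⟨a, ha⟩ ⟨b, hb⟩ := by
  induction w with
  | nil => exact Reachable.refl _
  | @cons u c d h p ih =>
    have hc : c ∈ B.verts := B.edge_vert h.1.symm
    have : B.coe.Adj ⟨u, ha⟩ ⟨c, hc⟩ := h.1
    exact this.reachable.trans (ih hc hb)

theorem reach_induce {V : Type*} {G : SimpleGraph V} {B : G.Subgraph} {x : B.verts} {a b : V}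
    (w : (avoidGraph B {x.1}).Walk a b) (ha : a ∈ B.verts) (hb : b ∈ B.verts)
    (hax : (⟨a, ha⟩ : B.verts) ∈ ({x}ᶜ : Set B.verts))
    (hbx : (⟨b, hb⟩ : B.verts) ∈ ({x}ᶜ : Set B.verts)) :
    (B.coe.induce {x}ᶜ).Reachable ⟨⟨a, ha⟩, hax⟩ ⟨⟨b, hb⟩, hbx⟩ := by
  induction w with
  | nil => exact Reachable.refl _
  | @cons u c d h p ih =>
    have hc : c ∈ B.verts := B.edge_vert h.1.symm
    have hcx : (⟨c, hc⟩ : B.verts) ∈ ({x}ᶜ : Set B.verts) := by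
      intro h'
      apply h.2.2
      have := congrArg Subtype.val h'
      exact this
    have : (B.coe.induce {x}ᶜ).Adj ⟨⟨u, ha⟩, hax⟩ ⟨⟨c, hc⟩, hcx⟩ := h.1
    exact this.reachable.trans (ih hc hb hcx hbx)

theorem good_of_piece {V : Type*} [Finite V] {G : SimpleGraph V} {B : G.Subgraph}
    (h : G.IsBlockPiece B) : GoodSub B := by
  rcases h with ⟨h3, hc, hd⟩ | ⟨u, v, huv, hv, hadj⟩
  · refine ⟨?_, ?_⟩
    · rw [← Set.one_lt_ncard_iff_nontrivial]
      have : Nat.card B.verts = B.verts.ncard := rfl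
      omega
    · intro S hS a ha b hb haS hbS
      by_cases hx : ∃ x ∈ S, x ∈ B.verts
      · obtain ⟨x, hxS, hxB⟩ := hx
        have hr := (hd ⟨x, hxB⟩).preconnected
          ⟨⟨a, ha⟩, fun h => haS (by have := congrArg Subtype.val h; simp at this; rwa [this])⟩
          ⟨⟨b, hb⟩, fun h => hbS (by have := congrArg Subtype.val h; simp at this; rwa [this])⟩
        refine hr.map (⟨fun y => y.1.1, ?_⟩ : (B.coe.induce {⟨x, hxB⟩}ᶜ) →g avoidGraph B S)
        intro y z hyz
        exact ⟨hyz, fun h => y.2 (Subtype.ext (hS h hxS)), fun h => z.2 (Subtype.ext (hS h hxS))⟩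
      · push Not at hx
        have hr := hc.preconnected ⟨a, ha⟩ ⟨b, hb⟩
        refine hr.map (⟨fun y => y.1, ?_⟩ : B.coe →g avoidGraph B S)
        intro y z hyz
        exact ⟨hyz, fun h => hx _ h y.2, fun h => hx _ h z.2⟩
  · refine ⟨⟨u, by simp [hv], v, by simp [hv], huv⟩, ?_⟩
    intro S hS a ha b hb haS hbS
    rw [hv] at ha hb
    rcases ha with rfl | rfl <;> rcases hb with rfl | rfl
    · rfl
    · exact Adj.reachable (G := avoidGraph B S) ⟨hadj, haS, hbS⟩
    · exact Adj.reachable (G := avoidGraph B S) ⟨hadj.symm, haS, hbS⟩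
    · rfl

theorem piece_of_good {V : Type*} [Finite V] {G : SimpleGraph V} {B : G.Subgraph}
    (h : GoodSub B) : G.IsBlockPiece B := by
  obtain ⟨hn, hr⟩ := h
  by_cases h3 : 3 ≤ Nat.card B.verts
  · left
    refine ⟨h3, ?_, ?_⟩
    · haveI : Nonempty B.verts := hn.nonempty.to_subtype
      refine ⟨fun a b => ?_⟩
      obtain ⟨w⟩ := hr ∅ Set.subsingleton_empty a a.2 b b.2 (by simp) (by simp)
      exact reach_coe w a.2 b.2
    · intro x
      haveI : Nonempty ({x}ᶜ : Set B.verts) := by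
        obtain ⟨y, hy, hyx⟩ := hn.exists_ne x.1
        exact ⟨⟨⟨y, hy⟩, fun h => hyx (congrArg Subtype.val h)⟩⟩
      refine ⟨fun a b => ?_⟩
      obtain ⟨w⟩ := hr {x.1} Set.subsingleton_singleton a.1.1 a.1.2 b.1.1 b.1.2
        (fun h => a.2 (Subtype.ext h)) (fun h => b.2 (Subtype.ext h))
      exact reach_induce w a.1.2 b.1.2 a.2 b.2
  · right
    have h2 := Set.one_lt_ncard_iff_nontrivial.2 hn
    have : Nat.card B.verts = B.verts.ncard := rfl
    obtain ⟨u, v, huv, hv⟩ := Set.ncard_eq_two.1 (show B.verts.ncard = 2 by omega)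
    refine ⟨u, v, huv, hv, ?_⟩
    obtain ⟨w⟩ := hr ∅ Set.subsingleton_empty u (by simp [hv]) v (by simp [hv]) (by simp) (by simp)
    cases w with
    | nil => exact absurd rfl huv
    | @cons _ c _ h p =>
      have hc : c ∈ B.verts := B.edge_vert h.1.symm
      rw [hv] at hc
      rcases hc with rfl | rfl
      · exact absurd rfl h.1.ne
      · exact h.1

/-- Gluing criterion. -/
theorem good_of_anchor {V : Type*} {G : SimpleGraph V} {B C : G.Subgraph} (hB : GoodSub B)
    (hBC : B ≤ C) (h : ∀ S : Set V, S.Subsingleton → ∀ a ∈ C.verts, a ∉ S →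
      ∃ s ∈ B.verts, s ∉ S ∧ (avoidGraph C S).Reachable a s) : GoodSub C := by
  refine ⟨hB.1.mono hBC.1, ?_⟩
  intro S hS a ha b hb haS hbS
  obtain ⟨s, hs, hsS, h1⟩ := h S hS a ha haS
  obtain ⟨t, ht, htS, h2⟩ := h S hS b hb hbS
  exact h1.trans (((hB.2 S hS s hs t ht hsS htS).mono (avoidGraph_mono hBC S)).trans h2.symm)

theorem good_sup {V : Type*} {G : SimpleGraph V} {B C : G.Subgraph} (hB : GoodSub B)
    (hC : GoodSub C) {u v : V} (huv : u ≠ v) (hu : u ∈ B.verts) (hv : v ∈ B.verts)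
    (hu' : u ∈ C.verts) (hv' : v ∈ C.verts) : GoodSub (B ⊔ C) := by
  refine good_of_anchor hB le_sup_left ?_
  intro S hS a ha haS
  rcases ha with ha | ha
  · exact ⟨a, ha, haS, Reachable.refl _⟩
  · by_cases huS : u ∈ S
    · have hvS : v ∉ S := fun h => huv (hS huS h)
      exact ⟨v, hv, hvS, (hC.2 S hS a ha v hv' haS hvS).mono (avoidGraph_mono le_sup_right S)⟩
    · exact ⟨u, hu, huS, (hC.2 S hS a ha u hu' haS huS).mono (avoidGraph_mono le_sup_right S)⟩

theorem walk_reach {V : Type*} {G : SimpleGraph V} {C : G.Subgraph} {S : Set V} {a b : V}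
    (w : G.Walk a b) (hw : w.toSubgraph ≤ C) (hS : ∀ x ∈ w.support, x ∉ S) :
    (avoidGraph C S).Reachable a b := by
  induction w with
  | nil => rfl
  | @cons u c d h p ih =>
    have h1 : (avoidGraph C S).Adj u c :=
      ⟨hw.2 (by simp [Walk.toSubgraph]), hS _ (by simp), hS _ (by simp)⟩
    exact h1.reachable.trans (ih (le_trans (by simp [Walk.toSubgraph]) hw)
      (fun x hx => hS x (by simp [hx])))

theorem good_ear {V : Type*} {G : SimpleGraph V} {B : G.Subgraph} (hB : GoodSub B)
    {u v : V} (hu : u ∈ B.verts) (hv : v ∈ B.verts) (p : G.Walk u v)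
    (hp : p.IsPath) : GoodSub (B ⊔ p.toSubgraph) := by
  refine good_of_anchor hB le_sup_left ?_
  intro S hS a ha haS
  rcases ha with ha | ha
  · exact ⟨a, ha, haS, Reachable.refl _⟩
  · rw [Walk.mem_verts_toSubgraph] at ha
    obtain ⟨q, r, hq, hr, rfl⟩ := hp.mem_support_iff_exists_append.1 ha
    have hle : q.toSubgraph ⊔ r.toSubgraph ≤ B ⊔ (q.append r).toSubgraph := by
      rw [Walk.toSubgraph_append]; exact le_sup_right
    by_cases hqS : ∀ x ∈ q.support, x ∉ S
    · exact ⟨u, hu, hqS _ (by simp), (walk_reach q (le_trans le_sup_left hle) hqS).symm⟩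
    · push Not at hqS
      obtain ⟨x, hx, hxS⟩ := hqS
      have hrS : ∀ y ∈ r.support, y ∉ S := by
        intro y hy hyS
        have hya : y ≠ a := fun h => haS (h ▸ hyS)
        exact hp.ne_of_mem_support_of_append hya hx hy (hS hxS hyS)
      exact ⟨v, hv, hrS _ (by simp), walk_reach r (le_trans le_sup_right hle) hrS⟩

theorem good_edge {V : Type*} [Finite V] {G : SimpleGraph V} {u v : V} (h : G.Adj u v) :
    GoodSub (G.subgraphOfAdj h) :=
  good_of_piece (Or.inr ⟨u, v, h.ne, by simp, by simp⟩)

theorem block_max {V : Type*} [Finite V] {G : SimpleGraph V} {B C : G.Subgraph}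
    (hB : G.IsBlock B) (hC : GoodSub C) (h : B ≤ C) : B = C :=
  hB.2 C (piece_of_good hC) h

theorem exists_block {V : Type*} [Finite V] {G : SimpleGraph V} {u v : V} (h : G.Adj u v) :
    ∃ B : G.Subgraph, G.IsBlock B ∧ B.Adj u v := by
  obtain ⟨M, hle, hM⟩ := Finite.exists_le_maximal (piece_of_good (good_edge h))
  exact ⟨M, ⟨hM.1, fun B' h' hl => le_antisymm hl (hM.2 h' hl)⟩, hle.2 (by simp)⟩

theorem block_unique {V : Type*} [Finite V] {G : SimpleGraph V} {B C : G.Subgraph}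
    (hB : G.IsBlock B) (hC : G.IsBlock C) {u v : V} (h1 : B.Adj u v) (h2 : C.Adj u v) :
    B = C := by
  have := good_sup (good_of_piece hB.1) (good_of_piece hC.1) h1.ne (B.edge_vert h1)
    (B.edge_vert h1.symm) (C.edge_vert h2) (C.edge_vert h2.symm)
  exact (block_max hB this le_sup_left).trans (block_max hC this le_sup_right).symm

theorem block_path {V : Type*} [Finite V] {G : SimpleGraph V} {B : G.Subgraph}
    (hB : G.IsBlock B) {u v : V} (hu : u ∈ B.verts) (hv : v ∈ B.verts) (p : G.Walk u v)
    (hp : p.IsPath) : p.toSubgraph ≤ B := by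
  rw [block_max hB (good_ear (good_of_piece hB.1) hu hv p hp) le_sup_left]
  exact le_sup_right

theorem lift_walk {V : Type*} {G : SimpleGraph V} {B : G.Subgraph} {u v : V} (w : G.Walk u v)
    (hw : w.toSubgraph ≤ B) (hu : u ∈ B.verts) (hv : v ∈ B.verts) :
    ∃ w' : B.coe.Walk ⟨u, hu⟩ ⟨v, hv⟩, w'.map B.hom = w := by
  induction w with
  | nil => exact ⟨Walk.nil, rfl⟩
  | @cons u c d h p ih =>
    have h1 : B.Adj u c := hw.2 (by simp [Walk.toSubgraph])
    obtain ⟨w', hw'⟩ := ih (le_trans (by simp [Walk.toSubgraph]) hw) (B.edge_vert h1.symm) hv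
    have h2 : B.coe.Adj ⟨u, hu⟩ ⟨c, B.edge_vert h1.symm⟩ := h1
    refine ⟨Walk.cons h2 w', ?_⟩
    subst hw'
    rfl

theorem restrict_conn {V : Type*} [Finite V] {G : SimpleGraph V} {B : G.Subgraph}
    (hB : G.IsBlock B) {k : ℕ} {c : Sym2 V → ℕ} (hc : G.IsKColorConnecting k c) :
    B.coe.IsKColorConnecting k (fun e => c (e.map Subtype.val)) := by
  rintro ⟨u, hu⟩ ⟨v, hv⟩ huv
  obtain ⟨p, hp, hk⟩ := hc u v (fun h => huv (Subtype.ext h))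
  obtain ⟨w, rfl⟩ := lift_walk p (block_path hB hu hv p hp) hu hv
  refine ⟨w, hp.of_map, ?_⟩
  have he : (w.map B.hom).edges = w.edges.map (Sym2.map Subtype.val) := Walk.edges_map _ _
  have h2 : k ≤ (((w.map B.hom).edges).map c).toFinset.card := hk
  rw [he, List.map_map] at h2
  exact h2

theorem restrict_cc {V : Type*} [Finite V] {G : SimpleGraph V} {B : G.Subgraph}
    (hB : G.IsBlock B) {k : ℕ} (hc : G.KColorConnectable k) : B.coe.ccConn k ≤ G.ccConn k := by
  have hne : {n : ℕ | ∃ c : Sym2 V → ℕ, G.IsKColorConnecting k c ∧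
      (c '' G.edgeSet).ncard = n}.Nonempty := by
    obtain ⟨c, hc⟩ := hc
    exact ⟨_, c, hc, rfl⟩
  obtain ⟨c, hc, hn⟩ := Nat.sInf_mem hne
  refine le_trans (Nat.sInf_le ⟨_, restrict_conn hB hc, rfl⟩) (le_trans ?_ hn.le)
  refine Set.ncard_le_ncard ?_ (Set.toFinite _)
  rintro _ ⟨e, he, rfl⟩
  refine ⟨e.map Subtype.val, ?_, rfl⟩
  induction e using Sym2.ind with
  | _ a b => exact B.adj_sub he

theorem small_coloring {V : Type*} [Finite V] {H : SimpleGraph V} {k : ℕ}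
    (hc : H.KColorConnectable k) :
    ∃ d : Sym2 V → ℕ, H.IsKColorConnecting k d ∧ ∀ e ∈ H.edgeSet, d e < H.ccConn k := by
  have hne : {n : ℕ | ∃ c : Sym2 V → ℕ, H.IsKColorConnecting k c ∧
      (c '' H.edgeSet).ncard = n}.Nonempty := by
    obtain ⟨c, hc⟩ := hc
    exact ⟨_, c, hc, rfl⟩
  obtain ⟨c, hc, hn⟩ := Nat.sInf_mem hne
  have hn' : (c '' H.edgeSet).ncard = H.ccConn k := hn
  have hfin : (c '' H.edgeSet).Finite := Set.toFinite _
  obtain ⟨f, hfi, hlt⟩ : ∃ f : ℕ → ℕ, Set.InjOn f (c '' H.edgeSet) ∧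
      ∀ x ∈ c '' H.edgeSet, f x < H.ccConn k := by
    obtain ⟨g⟩ : Nonempty ((c '' H.edgeSet) ≃ Fin (H.ccConn k)) := by
      haveI := hfin.to_subtype
      exact ⟨Finite.equivFinOfCardEq hn'⟩
    classical
    refine ⟨fun x => if hx : x ∈ c '' H.edgeSet then (g ⟨x, hx⟩).1 else 0, ?_, ?_⟩
    · intro x hx y hy hxy
      simp only [dif_pos hx, dif_pos hy] at hxy
      exact congrArg Subtype.val (g.injective (Fin.ext hxy))
    · intro x hx
      simp only [dif_pos hx]
      exact (g ⟨x, hx⟩).2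
  refine ⟨fun e => f (c e), ?_, fun e he => hlt _ ⟨e, he, rfl⟩⟩
  intro u v huv
  obtain ⟨p, hp, hk⟩ := hc u v huv
  refine ⟨p, hp, ?_⟩
  have h1 : (p.edges.map fun e => f (c e)).toFinset = (p.edges.map c).toFinset.image f := by
    ext n
    simp
  rw [h1, Finset.card_image_of_injOn]
  · exact hk
  · refine hfi.mono ?_
    intro n hn
    simp only [Finset.mem_coe, List.mem_toFinset, List.mem_map] at hn
    obtain ⟨e, he, rfl⟩ := hn
    exact ⟨e, Walk.edges_subset_edgeSet p he, rfl⟩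

theorem last_in {V : Type*} {G : SimpleGraph V} (A : Set V) {x v : V} (w : G.Walk x v)
    (hw : w.IsPath) (h : ∃ z ∈ w.support, z ∈ A) :
    ∃ y ∈ A, ∃ r : G.Walk y v, r.IsPath ∧ r.support ⊆ w.support ∧
      ∀ z ∈ r.support, z ∈ A → z = y := by
  induction w with
  | @nil u =>
    obtain ⟨z, hz, hzA⟩ := h
    simp at hz
    subst hz
    exact ⟨_, hzA, Walk.nil, by simp, by simp, by simp⟩
  | @cons u c d hadj p ih =>
    by_cases hp : ∃ z ∈ p.support, z ∈ A
    · obtain ⟨y, hy, r, hr, hs, hz⟩ := ih hw.of_cons hp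
      exact ⟨y, hy, r, hr, fun z hz => by simp [hs hz], hz⟩
    · push Not at hp
      obtain ⟨z, hz, hzA⟩ := h
      have hzu : z = u := by
        rw [Walk.support_cons, List.mem_cons] at hz
        rcases hz with h | h
        · exact h
        · exact absurd hzA (hp z h)
      subst hzu
      refine ⟨z, hzA, Walk.cons hadj p, hw, fun _ h => h, ?_⟩
      intro y hy hyA
      rw [Walk.support_cons, List.mem_cons] at hy
      rcases hy with h | h
      · exact h
      · exact absurd hyA (hp y h)

theorem append_path {V : Type*} {G : SimpleGraph V} {u y v : V} {q : G.Walk u y}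
    {r : G.Walk y v} (hq : q.IsPath) (hr : r.IsPath)
    (h : ∀ z ∈ q.support, z ∈ r.support → z = y) : (q.append r).IsPath := by
  rw [Walk.isPath_def, Walk.support_append, List.nodup_append']
  have hr' := hr.support_nodup
  rw [Walk.support_eq_cons, List.nodup_cons] at hr'
  refine ⟨hq.support_nodup, hr'.2, ?_⟩
  intro z hz hz'
  have := h z hz (List.mem_of_mem_tail hz')
  subst this
  exact hr'.1 hz'

theorem combine {V : Type*} [Finite V] {G : SimpleGraph V} (hG : G.Connected) {k t N : ℕ}
    (B : Fin t → G.Subgraph) (hB : ∀ i, G.IsBlock (B i)) (hinj : Function.Injective B)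
    (hall : ∀ B' : G.Subgraph, G.IsBlock B' → ∃ i, B' = B i)
    (d : ∀ i, Sym2 (B i).verts → ℕ) (hd : ∀ i, (B i).coe.IsKColorConnecting k (d i))
    (hN : ∀ i, ∀ e ∈ (B i).coe.edgeSet, d i e < N) :
    ∃ c : Sym2 V → ℕ, G.IsKColorConnecting k c ∧ ∀ e ∈ G.edgeSet, c e < N := by
  classical
  have hex : ∀ e : Sym2 V, ∃ n : ℕ, ∀ i, ∀ e' ∈ (B i).coe.edgeSet,
      e'.map Subtype.val = e → n = d i e' := by
    intro e
    by_cases h : ∃ i, ∃ e' ∈ (B i).coe.edgeSet, e'.map Subtype.val = e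
    · obtain ⟨i, e', he', rfl⟩ := h
      refine ⟨d i e', ?_⟩
      intro j f hf hfe
      have hij : B i = B j := by
        induction e' using Sym2.ind with
        | _ a b =>
        have h1 : (B i).Adj a b := he'
        have h2 : Sym2.map Subtype.val f ∈ (B j).edgeSet := by
          induction f using Sym2.ind with
          | _ a b => exact hf
        rw [hfe] at h2
        exact block_unique (hB i) (hB j) h1 h2
      obtain rfl := hinj hij
      rw [Sym2.map.injective Subtype.val_injective hfe]
    · push Not at h
      exact ⟨0, fun i e' he' hee => absurd hee (h i e' he')⟩
  choose c hc using hex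
  refine ⟨c, ?_, ?_⟩
  · intro u v huv
    obtain ⟨p, hp⟩ := (hG.preconnected u v).exists_isPath
    cases p with
    | nil => exact absurd rfl huv
    | @cons _ x _ h p =>
      obtain ⟨C, hC, hCa⟩ := exists_block h
      obtain ⟨i, rfl⟩ := hall C hC
      have hx := (B i).edge_vert hCa.symm
      have hu := (B i).edge_vert hCa
      rw [Walk.cons_isPath_iff] at hp
      obtain ⟨y, hy, r, hr, hs, hz⟩ := last_in (B i).verts p hp.1 ⟨x, by simp, hx⟩
      have huy : u ≠ y := by
        rintro rfl
        exact hp.2 (hs (by simp))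
      obtain ⟨q, hq, hqk⟩ := hd i ⟨u, hu⟩ ⟨y, hy⟩ (fun h => huy (congrArg Subtype.val h))
      obtain ⟨Q, hQ, hQs, hQe⟩ : ∃ Q : G.Walk u y, Q.IsPath ∧
          Q.support = q.support.map Subtype.val ∧
          Q.edges = q.edges.map (Sym2.map Subtype.val) :=
        ⟨q.map (B i).hom, hq.map Subgraph.hom_injective, Walk.support_map _ _, Walk.edges_map _ _⟩
      refine ⟨Q.append r, append_path hQ hr ?_, ?_⟩
      · intro z hzq hzr
        refine hz z hzr ?_
        rw [hQs, List.mem_map] at hzq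
        obtain ⟨z', -, rfl⟩ := hzq
        exact z'.2
      · refine hqk.trans (Finset.card_le_card ?_)
        intro n hn
        rw [List.mem_toFinset, List.mem_map] at hn ⊢
        obtain ⟨e, he, rfl⟩ := hn
        refine ⟨e.map Subtype.val, ?_, hc _ i e (Walk.edges_subset_edgeSet q he) rfl⟩
        rw [Walk.edges_append, List.mem_append, hQe, List.mem_map]
        exact Or.inl ⟨e, he, rfl⟩
  · intro e
    induction e using Sym2.ind with
    | _ a b =>
    intro he
    obtain ⟨C, hC, hCa⟩ := exists_block (show G.Adj a b from he)
    obtain ⟨i, rfl⟩ := hall C hC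
    have h1 : s(⟨a, (B i).edge_vert hCa⟩, ⟨b, (B i).edge_vert hCa.symm⟩) ∈ (B i).coe.edgeSet := hCa
    rw [hc s(a, b) i _ h1 rfl]
    exact hN i _ h1

theorem stmt_2 {V : Type*} [Fintype V] (G : SimpleGraph V) (hG : G.Connected)
    (k t : ℕ) (hk : 2 ≤ k) (ht : 0 < t) (B : Fin t → G.Subgraph)
    (hB : ∀ i, G.IsBlock (B i)) (hinj : Function.Injective B)
    (hall : ∀ B' : G.Subgraph, G.IsBlock B' → ∃ i, B' = B i) :
    (G.KColorConnectable k ↔ ∀ i, (B i).coe.KColorConnectable k) ∧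
    (G.KColorConnectable k →
      G.ccConn k = Finset.univ.sup fun i => (B i).coe.ccConn k) := by
  have key : (∀ i, (B i).coe.KColorConnectable k) → ∃ c : Sym2 V → ℕ,
      G.IsKColorConnecting k c ∧
        ∀ e ∈ G.edgeSet, c e < Finset.univ.sup fun i => (B i).coe.ccConn k := by
    intro h
    choose d hd hlt using fun i => small_coloring (h i)
    refine combine hG B hB hinj hall d hd ?_
    intro i e he
    exact (hlt i e he).trans_le
      (Finset.le_sup (f := fun i => (B i).coe.ccConn k) (Finset.mem_univ i))
  have hfwd : G.KColorConnectable k → ∀ i, (B i).coe.KColorConnectable k :=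
    fun ⟨c, hc⟩ i => ⟨_, restrict_conn (hB i) hc⟩
  refine ⟨⟨hfwd, fun h => ?_⟩, fun hc => le_antisymm ?_ ?_⟩
  · obtain ⟨c, hc, -⟩ := key h
    exact ⟨c, hc⟩
  · obtain ⟨c, hc, hlt⟩ := key (hfwd hc)
    refine le_trans (Nat.sInf_le ⟨c, hc, rfl⟩) ?_
    have : c '' G.edgeSet ⊆
        (Finset.range (Finset.univ.sup fun i => (B i).coe.ccConn k) : Set ℕ) := by
      rintro _ ⟨e, he, rfl⟩
      simpa using hlt e he
    refine le_trans (Set.ncard_le_ncard this (Finset.finite_toSet _)) ?_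
    rw [Set.ncard_coe_finset, Finset.card_range]
  · exact Finset.sup_le fun i _ => restrict_cc (hB i) hc
end

section
/- Let k ≥ 2 and let G be a finite 2-connected simple graph that contains a cycle of length at least 2k. Then G is k-color connectable and cc_k(G) = k. -/
open SimpleGraph

namespace CCProof

/-- Appending two paths that meet only in the junction gives a path, and conversely. -/
lemma append_isPath_iff {V : Type*} {G : SimpleGraph V} {a b d : V}
    (p : G.Walk a b) (q : G.Walk b d) :
    (p.append q).IsPath ↔ p.IsPath ∧ q.IsPath ∧ ∀ z, z ∈ p.support → z ∈ q.support → z = b := by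
  simp only [Walk.isPath_def, Walk.support_append]
  have hq : q.support = b :: q.support.tail := by simp
  have hb : b ∈ p.support := p.end_mem_support
  rw [hq]
  simp only [List.tail_cons, List.nodup_append, List.nodup_cons, List.mem_cons]
  constructor
  · rintro ⟨h1, h2, h3⟩
    refine ⟨h1, ⟨fun h => h3 b hb b h rfl, h2⟩, ?_⟩
    rintro z hz (h | h)
    · exact h
    · exact absurd rfl (h3 z hz z h)
  · rintro ⟨h1, ⟨h2, h3⟩, h4⟩
    refine ⟨h1, h3, ?_⟩
    rintro x hx y hy rfl
    exact h2 (h4 x hx (Or.inr hy) ▸ hy)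

lemma split_path {V : Type*} {G : SimpleGraph V} {a b x : V} (p : G.Walk a b) (hp : p.IsPath)
    (hx : x ∈ p.support) : ∃ (A : G.Walk a x) (B : G.Walk x b), A.IsPath ∧ B.IsPath ∧
      (∀ z, z ∈ A.support → z ∈ B.support → z = x) ∧
      ∀ z, z ∈ p.support ↔ z ∈ A.support ∨ z ∈ B.support := by
  classical
  have h := p.take_spec hx
  rw [← h, append_isPath_iff] at hp
  refine ⟨p.takeUntil x hx, p.dropUntil x hx, hp.1, hp.2.1, hp.2.2, fun z => ?_⟩
  rw [← Walk.mem_support_append_iff, h]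

/-- Two distinct vertices of a path are joined to the two ends by disjoint subpaths. -/
lemma split_path_two {V : Type*} {G : SimpleGraph V} {a b x y : V} (p : G.Walk a b)
    (hp : p.IsPath) (hx : x ∈ p.support) (hy : y ∈ p.support) (hxy : x ≠ y) :
    (∃ (A : G.Walk a x) (B : G.Walk y b), A.IsPath ∧ B.IsPath ∧
      (∀ z, z ∈ A.support → z ∉ B.support) ∧ (∀ z ∈ A.support, z ∈ p.support) ∧
      (∀ z ∈ B.support, z ∈ p.support)) ∨
    (∃ (A : G.Walk a y) (B : G.Walk x b), A.IsPath ∧ B.IsPath ∧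
      (∀ z, z ∈ A.support → z ∉ B.support) ∧ (∀ z ∈ A.support, z ∈ p.support) ∧
      (∀ z ∈ B.support, z ∈ p.support)) := by
  obtain ⟨A, B, hA, hB, hd, hs⟩ := split_path p hp hx
  rcases (hs y).1 hy with h | h
  · right
    obtain ⟨A1, A2, hA1, hA2, hd', hs'⟩ := split_path A hA h
    refine ⟨A1, B, hA1, hB, fun z h1 h2 => ?_, fun z hz => ?_, fun z hz => ?_⟩
    · have := hd z ((hs' z).2 (Or.inl h1)) h2
      subst this
      exact hxy (hd' z h1 A2.end_mem_support)
    · exact (hs z).2 (Or.inl ((hs' z).2 (Or.inl hz)))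
    · exact (hs z).2 (Or.inr hz)
  · left
    obtain ⟨B1, B2, hB1, hB2, hd', hs'⟩ := split_path B hB h
    refine ⟨A, B2, hA, hB2, fun z h1 h2 => ?_, fun z hz => ?_, fun z hz => ?_⟩
    · have := hd z h1 ((hs' z).2 (Or.inr h2))
      subst this
      exact hxy (hd' z B1.start_mem_support h2)
    · exact (hs z).2 (Or.inl hz)
    · exact (hs z).2 (Or.inr ((hs' z).2 (Or.inr hz)))

/-- First hit of a set along a walk. -/
lemma first_hit {V : Type*} {G : SimpleGraph V} (S : Set V) {a b : V} (p : G.Walk a b)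
    (hb : b ∈ S) : ∃ t ∈ S, ∃ q : G.Walk a t, (∀ z ∈ q.support, z ∈ p.support) ∧
      ∀ z ∈ q.support, z ∈ S → z = t := by
  induction p with
  | nil => exact ⟨_, hb, Walk.nil, by simp, by simp⟩
  | @cons a' b' c' h p ih =>
    by_cases ha : a' ∈ S
    · exact ⟨a', ha, Walk.nil, by simp, by simp⟩
    · obtain ⟨t, ht, q, h1, h2⟩ := ih hb
      refine ⟨t, ht, Walk.cons h q, ?_, ?_⟩
      · intro z hz
        simp only [Walk.support_cons, List.mem_cons] at hz ⊢
        rcases hz with hz | hz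
        · exact Or.inl hz
        · exact Or.inr (h1 z hz)
      · intro z hz hzS
        simp only [Walk.support_cons, List.mem_cons] at hz
        rcases hz with rfl | hz
        · exact absurd hzS ha
        · exact h2 z hz hzS

/-- Existence of ears. -/
lemma exists_ear {V : Type*} {G : SimpleGraph V} (hG : G.IsTwoConnected) (S : Set V)
    (hS : S.Nontrivial) (hne : S ≠ Set.univ) : ∃ s ∈ S, ∃ t ∈ S, s ≠ t ∧ ∃ q : G.Walk s t,
      q.IsPath ∧ (∃ z ∈ q.support, z ∉ S) ∧ ∀ z ∈ q.support, z ∈ S → z = s ∨ z = t := by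
  classical
  obtain ⟨w, hw⟩ := (Set.ne_univ_iff_exists_notMem S).1 hne
  obtain ⟨s0, hs0⟩ := hS.nonempty
  obtain ⟨p⟩ := hG.2.1.preconnected s0 w
  obtain ⟨d, -, hds, hdv⟩ := p.exists_boundary_dart S hs0 hw
  have hadj : G.Adj d.fst d.snd := d.adj
  obtain ⟨t0, ht0, hne0⟩ := hS.exists_ne d.fst
  obtain ⟨r⟩ := (hG.2.2 d.fst).preconnected ⟨d.snd, by simp⟩
    ⟨t0, by simpa using hne0⟩
  obtain ⟨r', hr'⟩ : ∃ r' : G.Walk d.snd t0, d.fst ∉ r'.support := by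
    refine ⟨r.map (Embedding.induce ({d.fst}ᶜ : Set V)).toHom, ?_⟩
    intro h
    erw [Walk.support_map] at h
    obtain ⟨z, -, hz⟩ := List.mem_map.1 h
    exact z.2 hz
  obtain ⟨t, ht, q, hq1, hq2⟩ := first_hit S r' ht0
  have hst : d.fst ≠ t := by
    rintro h
    exact hr' (h ▸ hq1 t q.end_mem_support)
  refine ⟨d.fst, hds, t, ht, hst, Walk.cons hadj q.bypass, ?_, ⟨d.snd, by simp, hdv⟩, ?_⟩
  · rw [Walk.cons_isPath_iff]
    exact ⟨q.bypass_isPath, fun h => hr' (hq1 _ (q.support_bypass_subset_support h))⟩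
  · intro z hz hzS
    simp only [Walk.support_cons, List.mem_cons] at hz
    rcases hz with rfl | hz
    · exact Or.inl rfl
    · exact Or.inr (hq2 z (q.support_bypass_subset_support hz) hzS)

/-- `S` is a good set: any two distinct vertices are joined inside `S` by a path whose edges use all
colors below `k`. -/
def Good {V : Type*} (G : SimpleGraph V) (k : ℕ) (f : Sym2 V → ℕ) (S : Set V) : Prop :=
  ∀ x ∈ S, ∀ y ∈ S, x ≠ y → ∃ p : G.Walk x y, p.IsPath ∧ (∀ z ∈ p.support, z ∈ S) ∧
    ∀ a < k, ∃ e ∈ p.edges, f e = a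

lemma good_ear {V : Type*} {G : SimpleGraph V} {k : ℕ} {f : Sym2 V → ℕ} {S : Set V}
    (hS : Good G k f S) {s t : V} (hs : s ∈ S) (ht : t ∈ S) (hst : s ≠ t) (q : G.Walk s t)
    (hq : q.IsPath) (hqS : ∀ z ∈ q.support, z ∈ S → z = s ∨ z = t) :
    Good G k f (S ∪ {z | z ∈ q.support}) := by
  have key : ∀ x, x ∈ q.support → x ∉ S → ∀ y ∈ S, ∃ p : G.Walk x y, p.IsPath ∧
      (∀ z ∈ p.support, z ∈ S ∪ {z | z ∈ q.support}) ∧ ∀ a < k, ∃ e ∈ p.edges, f e = a := by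
    intro x hx hxS y hy
    obtain ⟨A, B, hA, hB, hd, hsup⟩ := split_path q hq hx
    by_cases hys : y = s
    · subst hys
      obtain ⟨p, hp, hpS, hpc⟩ := hS t ht y hy hst.symm
      refine ⟨B.append p, ?_, ?_, ?_⟩
      · rw [append_isPath_iff]
        refine ⟨hB, hp, fun z h1 h2 => ?_⟩
        rcases hqS z ((hsup z).2 (Or.inr h1)) (hpS z h2) with h | h
        · subst h
          exact absurd (hd z A.start_mem_support h1 ▸ hs) hxS
        · exact h
      · intro z hz
        rcases (Walk.mem_support_append_iff _ _).1 hz with h | h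
        · exact Or.inr ((hsup z).2 (Or.inr h))
        · exact Or.inl (hpS z h)
      · intro a ha
        obtain ⟨e, he, hfe⟩ := hpc a ha
        exact ⟨e, by simp [Walk.edges_append, he], hfe⟩
    · obtain ⟨p, hp, hpS, hpc⟩ := hS s hs y hy (Ne.symm hys)
      refine ⟨A.reverse.append p, ?_, ?_, ?_⟩
      · rw [append_isPath_iff]
        refine ⟨hA.reverse, hp, fun z h1 h2 => ?_⟩
        have h1 : z ∈ A.support := by simpa using h1
        rcases hqS z ((hsup z).2 (Or.inl h1)) (hpS z h2) with h | h
        · exact h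
        · subst h
          exact absurd (hd z h1 B.end_mem_support ▸ ht) hxS
      · intro z hz
        rcases (Walk.mem_support_append_iff _ _).1 hz with h | h
        · exact Or.inr ((hsup z).2 (Or.inl (by simpa using h)))
        · exact Or.inl (hpS z h)
      · intro a ha
        obtain ⟨e, he, hfe⟩ := hpc a ha
        exact ⟨e, by simp [Walk.edges_append, he], hfe⟩
  have key2 : ∀ x y, x ∉ S → y ∉ S → ∀ (A : G.Walk s x) (B : G.Walk y t), A.IsPath → B.IsPath →
      (∀ z, z ∈ A.support → z ∉ B.support) → (∀ z ∈ A.support, z ∈ q.support) →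
      (∀ z ∈ B.support, z ∈ q.support) → ∃ p : G.Walk x y, p.IsPath ∧
      (∀ z ∈ p.support, z ∈ S ∪ {z | z ∈ q.support}) ∧ ∀ a < k, ∃ e ∈ p.edges, f e = a := by
    intro x y hx hy A B hA hB hd hAq hBq
    obtain ⟨p, hp, hpS, hpc⟩ := hS s hs t ht hst
    refine ⟨A.reverse.append (p.append B.reverse), ?_, ?_, ?_⟩
    · rw [append_isPath_iff, append_isPath_iff]
      refine ⟨hA.reverse, ⟨hp, hB.reverse, fun z h1 h2 => ?_⟩, fun z h1 h2 => ?_⟩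
      · have h2 : z ∈ B.support := by simpa using h2
        rcases hqS z (hBq z h2) (hpS z h1) with h | h
        · subst h
          exact absurd h2 (hd z A.start_mem_support)
        · exact h
      · have h1 : z ∈ A.support := by simpa using h1
        rcases (Walk.mem_support_append_iff _ _).1 h2 with h2 | h2
        · rcases hqS z (hAq z h1) (hpS z h2) with h | h
          · exact h
          · subst h
            exact absurd B.end_mem_support (hd z h1)
        · exact absurd (by simpa using h2) (hd z h1)
    · intro z hz
      rcases (Walk.mem_support_append_iff _ _).1 hz with h | h
      · exact Or.inr (hAq z (by simpa using h))
      · rcases (Walk.mem_support_append_iff _ _).1 h with h | h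
        · exact Or.inl (hpS z h)
        · exact Or.inr (hBq z (by simpa using h))
    · intro a ha
      obtain ⟨e, he, hfe⟩ := hpc a ha
      exact ⟨e, by simp [Walk.edges_append, he], hfe⟩
  have rev : ∀ x y, (∃ p : G.Walk x y, p.IsPath ∧
      (∀ z ∈ p.support, z ∈ S ∪ {z | z ∈ q.support}) ∧ ∀ a < k, ∃ e ∈ p.edges, f e = a) →
      ∃ p : G.Walk y x, p.IsPath ∧
      (∀ z ∈ p.support, z ∈ S ∪ {z | z ∈ q.support}) ∧ ∀ a < k, ∃ e ∈ p.edges, f e = a := by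
    rintro x y ⟨p, h1, h2, h3⟩
    refine ⟨p.reverse, h1.reverse, fun z hz => h2 z (by simpa using hz), fun a ha => ?_⟩
    obtain ⟨e, he, hfe⟩ := h3 a ha
    exact ⟨e, by simpa using he, hfe⟩
  intro x hx y hy hxy
  by_cases hxS : x ∈ S
  · by_cases hyS : y ∈ S
    · obtain ⟨p, hp, hpS, hpc⟩ := hS x hxS y hyS hxy
      exact ⟨p, hp, fun z hz => Or.inl (hpS z hz), hpc⟩
    · exact rev _ _ (key y (hy.resolve_left hyS) hyS x hxS)
  · by_cases hyS : y ∈ S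
    · exact key x (hx.resolve_left hxS) hxS y hyS
    · rcases split_path_two q hq (hx.resolve_left hxS) (hy.resolve_left hyS) hxy with
        ⟨A, B, hA, hB, hd, h1, h2⟩ | ⟨A, B, hA, hB, hd, h1, h2⟩
      · exact key2 x y hxS hyS A B hA hB hd h1 h2
      · exact rev _ _ (key2 y x hyS hxS A B hA hB hd h1 h2)

lemma good_univ {V : Type*} [Finite V] {G : SimpleGraph V} (hG : G.IsTwoConnected) {k : ℕ}
    {f : Sym2 V → ℕ} {S : Set V} (hS : Good G k f S) (hn : S.Nontrivial) :
    Good G k f Set.univ := by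
  obtain ⟨M, hSM, hM⟩ := (Set.toFinite {T : Set V | Good G k f T}).exists_le_maximal hS
  by_cases h : M = Set.univ
  · exact h ▸ hM.prop
  · obtain ⟨s, hs, t, ht, hst, q, hq, ⟨z, hz, hzM⟩, hqM⟩ := exists_ear hG M (hn.mono hSM) h
    have h1 := good_ear hM.prop hs ht hst q hq hqM
    exact absurd (hM.le_of_ge h1 Set.subset_union_left (Or.inr hz)) hzM

/-- The coloring attached to a closed walk. -/
noncomputable def col {V : Type*} (k : ℕ) (l : List (Sym2 V)) (e : Sym2 V) : ℕ :=
  open Classical in if l.idxOf e < 2 * k then l.idxOf e % k else 0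

lemma arith (k i j : ℕ) :
    (∀ a < k, ∃ m, m < 2 * k ∧ m % k = a ∧ i ≤ m ∧ m < j) ∨
    (∀ a < k, ∃ m, m < 2 * k ∧ m % k = a ∧ (m < i ∨ j ≤ m)) := by
  by_cases h : min i (2 * k) + k ≤ min j (2 * k)
  · left
    intro a ha
    by_cases hi : i ≤ a
    · exact ⟨a, by omega, Nat.mod_eq_of_lt ha, by omega, by omega⟩
    · exact ⟨a + k, by omega, by rw [Nat.add_mod_right, Nat.mod_eq_of_lt ha], by omega, by omega⟩
  · right
    intro a ha
    by_cases hi : a < i ∨ j ≤ a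
    · exact ⟨a, by omega, Nat.mod_eq_of_lt ha, hi⟩
    · exact ⟨a + k, by omega, by rw [Nat.add_mod_right, Nat.mod_eq_of_lt ha], by omega⟩

lemma good_cycle {V : Type*} {G : SimpleGraph V} {u : V} (c : G.Walk u u) (hc : c.IsCycle)
    {k : ℕ} (hlen : 2 * k ≤ c.length) : Good G k (col k c.edges) {z | z ∈ c.support} := by
  classical
  have hcol : ∀ m (hm : m < c.edges.length), m < 2 * k → col k c.edges c.edges[m] = m % k := by
    intro m hm hmk
    have : c.edges.idxOf c.edges[m] = m := hc.edges_nodup.idxOf_getElem m hm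
    simp only [col, this, hmk, if_true]
  have hlenE : c.edges.length = c.length := c.length_edges
  have hlenS : c.support.length = c.length + 1 := c.length_support
  have hnd := hc.support_nodup
  have hmin : ∀ i, i ≤ c.length → i ⊓ c.length = i := fun i h => min_eq_left h
  have hdrop : ∀ i, 1 ≤ i → c.support.drop i = c.support.tail.drop (i - 1) := by
    intro i hi
    rw [← List.drop_one, List.drop_drop]; congr 1; omega
  have htake : ∀ i, (c.support.take (i + 1)).tail = c.support.tail.take i := by
    intro i
    cases c.support <;> simp
  have hidx : ∀ x ∈ c.support, ∃ i, 1 ≤ i ∧ i ≤ c.length ∧ c.getVert i = x := by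
    intro x hx
    obtain ⟨i, hi, hil⟩ := Walk.mem_support_iff_exists_getVert.1 hx
    rcases Nat.eq_zero_or_pos i with rfl | h
    · refine ⟨c.length, ?_, le_rfl, by simpa using hi⟩
      have := hc.three_le_length
      omega
    · exact ⟨i, h, hil, hi⟩
  have main : ∀ i j, 1 ≤ i → i < j → j ≤ c.length →
      ∃ p : G.Walk (c.getVert i) (c.getVert j), p.IsPath ∧ (∀ z ∈ p.support, z ∈ c.support) ∧
      ∀ a < k, ∃ e ∈ p.edges, col k c.edges e = a := by
    intro i j hi hij hj
    rcases arith k i j with h | h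
    · have e1 : (c.drop i).getVert (j - i) = c.getVert j := by
        rw [Walk.drop_getVert]; congr 1; omega
      refine ⟨((c.drop i).take (j - i)).copy rfl e1, ?_, ?_, ?_⟩
      · simp only [Walk.isPath_def, Walk.support_copy, Walk.support_take,
          Walk.drop_support_eq_support_drop_min, hmin i (by omega), hdrop i hi]
        exact hnd.sublist ((List.take_sublist _ _).trans (List.drop_sublist _ _))
      · intro z hz
        simp only [Walk.support_copy, Walk.support_take,
          Walk.drop_support_eq_support_drop_min] at hz
        exact List.mem_of_mem_drop (List.mem_of_mem_take hz)
      · intro a ha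
        obtain ⟨m, hm, hma, h1, h2⟩ := h a ha
        refine ⟨c.edges[m]'(by omega), ?_, by rw [hcol _ _ hm, hma]⟩
        simp only [Walk.edges_copy, Walk.edges_take, Walk.edges_drop]
        rw [List.mem_iff_getElem]
        refine ⟨m - i, by simp; omega, ?_⟩
        simp only [List.getElem_take, List.getElem_drop]
        congr 1; omega
    · refine ⟨((c.drop j).append (c.take i)).reverse, ?_, ?_, ?_⟩
      · rw [Walk.isPath_reverse_iff]
        simp only [Walk.isPath_def, Walk.support_append, Walk.support_take,
          Walk.drop_support_eq_support_drop_min, hmin j hj, hdrop j (by omega), htake]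
        refine List.nodup_append'.2 ⟨hnd.sublist (List.drop_sublist _ _),
          hnd.sublist (List.take_sublist _ _), ?_⟩
        exact (List.disjoint_take_drop hnd (by omega)).symm
      · intro z hz
        simp only [Walk.support_reverse, List.mem_reverse, Walk.support_append, Walk.support_take,
          Walk.drop_support_eq_support_drop_min, List.mem_append] at hz
        rcases hz with hz | hz
        · exact List.mem_of_mem_drop hz
        · exact List.mem_of_mem_take (List.mem_of_mem_tail hz)
      · intro a ha
        obtain ⟨m, hm, hma, h1⟩ := h a ha
        refine ⟨c.edges[m]'(by omega), ?_, by rw [hcol _ _ hm, hma]⟩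
        simp only [Walk.edges_reverse, Walk.edges_append, Walk.edges_take, Walk.edges_drop,
          List.mem_reverse, List.mem_append]
        rcases h1 with h1 | h1
        · right
          rw [List.mem_iff_getElem]
          exact ⟨m, by simp; omega, by simp⟩
        · left
          rw [List.mem_iff_getElem]
          refine ⟨m - j, by simp; omega, ?_⟩
          simp only [List.getElem_drop]
          congr 1; omega
  intro x hx y hy hxy
  obtain ⟨i, hi, hi', rfl⟩ := hidx x hx
  obtain ⟨j, hj, hj', rfl⟩ := hidx y hy
  rcases lt_trichotomy i j with h | h | h
  · exact main i j hi h hj'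
  · exact absurd (by rw [h]) hxy
  · obtain ⟨p, h1, h2, h3⟩ := main j i hj h hi'
    refine ⟨p.reverse, h1.reverse, fun z hz => h2 z (by simpa using hz), fun a ha => ?_⟩
    obtain ⟨e, he, hfe⟩ := h3 a ha
    exact ⟨e, by simpa using he, hfe⟩

end CCProof

open CCProof in
theorem stmt_4 {V : Type*} [Fintype V] (G : SimpleGraph V) (k : ℕ) (hk : 2 ≤ k)
    (hG : G.IsTwoConnected) (u : V) (c : G.Walk u u) (hc : c.IsCycle)
    (hlen : 2 * k ≤ c.length) :
    G.KColorConnectable k ∧ G.ccConn k = k := by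
  classical
  have hn : ({z | z ∈ c.support} : Set V).Nontrivial :=
    ⟨u, c.start_mem_support, c.snd, by simp,
      (c.adj_snd hc.not_nil).ne⟩
  have hgood := good_univ hG (good_cycle c hc hlen) hn
  have hconn : G.IsKColorConnecting k (col k c.edges) := by
    intro x y hxy
    obtain ⟨p, hp, -, hpc⟩ := hgood x trivial y trivial hxy
    refine ⟨p, hp, ?_⟩
    have : Finset.range k ⊆ (p.edges.map (col k c.edges)).toFinset := by
      intro a ha
      simpa using hpc a (Finset.mem_range.1 ha)
    simpa using Finset.card_le_card this
  have hlow : ∀ f : Sym2 V → ℕ, G.IsKColorConnecting k f → k ≤ (f '' G.edgeSet).ncard := by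
    intro f hf
    obtain ⟨x, -, y, -, hxy⟩ := hn
    obtain ⟨p, -, hp⟩ := hf x y hxy
    refine hp.trans ?_
    rw [← Set.ncard_coe_finset]
    refine Set.ncard_le_ncard ?_ (Set.toFinite _)
    intro a ha
    simp only [List.coe_toFinset, List.mem_map, Set.mem_ofPred_eq] at ha
    obtain ⟨e, he, rfl⟩ := ha
    exact ⟨e, p.edges_subset_edgeSet he, rfl⟩
  have hup : (col k c.edges '' G.edgeSet).ncard ≤ k := by
    have : col k c.edges '' G.edgeSet ⊆ (Finset.range k : Finset ℕ) := by
      rintro _ ⟨e, -, rfl⟩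
      simp only [Finset.coe_range, Set.mem_Iio, col]
      split_ifs
      · exact Nat.mod_lt _ (by omega)
      · omega
    have h := Set.ncard_le_ncard this (Finset.finite_toSet _)
    rwa [Set.ncard_coe_finset, Finset.card_range] at h
  refine ⟨⟨_, hconn⟩, le_antisymm ?_ ?_⟩
  · exact Nat.sInf_le ⟨_, hconn, le_antisymm hup (hlow _ hconn)⟩
  · exact le_csInf ⟨_, _, hconn, rfl⟩ (by rintro n ⟨f, hf, rfl⟩; exact hlow f hf)
end

section
/- Let k ≥ 2, let G be a finite simple graph, and let G' be obtained from G by subdividing a single edge uv (i.e., deleting uv and adding a new vertex w together with the edges uw and wv). If G is k-color connectable, then G' is k-color connectable and cc_k(G') ≤ cc_k(G). -/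
open SimpleGraph

/-- The graph obtained from `G` by subdividing the edge `uv`: delete `uv` and add a new
vertex `none` joined to `u` and `v`. -/
def SimpleGraph.subdivideEdge {V : Type*} (G : SimpleGraph V) (u v : V) :
    SimpleGraph (Option V) :=
  ((G.deleteEdges {s(u, v)}).map Function.Embedding.some) ⊔
    SimpleGraph.fromEdgeSet {s(none, some u), s(none, some v)}

/-- `IsSubdivision G H` : `H` is (up to isomorphism) obtained from `G` by a finite,
possibly empty, sequence of single-edge subdivisions. -/
inductive IsSubdivision : ∀ {V W : Type u}, SimpleGraph V → SimpleGraph W → Prop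
  | of_iso {V W : Type u} {G : SimpleGraph V} {H : SimpleGraph W} :
      Nonempty (G ≃g H) → IsSubdivision G H
  | step {V W : Type u} {G : SimpleGraph V} {H : SimpleGraph W} (u v : V) (h : G.Adj u v) :
      IsSubdivision (G.subdivideEdge u v) H → IsSubdivision G H


open Classical in
/-- The induced coloring on the subdivided graph. -/
noncomputable def subdivColor {V : Type*} (u v : V) (c : Sym2 V → ℕ) : Sym2 (Option V) → ℕ :=
  fun e => if none ∈ e then c s(u, v) else c (e.map (fun o => o.getD u))

theorem subdivColor_none {V : Type*} (u v : V) (c : Sym2 V → ℕ) (x : Option V) :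
    subdivColor u v c s(none, x) = c s(u, v) := by
  simp [subdivColor]

theorem subdivColor_some {V : Type*} (u v : V) (c : Sym2 V → ℕ) (x y : V) :
    subdivColor u v c s(some x, some y) = c s(x, y) := by
  simp [subdivColor]

theorem subdiv_adj_none {V : Type*} (G : SimpleGraph V) (u v x : V) (hx : x ∈ s(u, v)) :
    (G.subdivideEdge u v).Adj none (some x) := by
  simp only [Sym2.mem_iff] at hx
  rcases hx with rfl | rfl <;> simp [SimpleGraph.subdivideEdge]

theorem subdiv_adj_some {V : Type*} (G : SimpleGraph V) (u v x y : V) (h : G.Adj x y)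
    (hx : s(x, y) ≠ s(u, v)) :
    (G.subdivideEdge u v).Adj (some x) (some y) := by
  unfold SimpleGraph.subdivideEdge
  rw [SimpleGraph.sup_adj]
  left
  rw [SimpleGraph.map_adj]
  exact ⟨x, y, by rw [SimpleGraph.deleteEdges_adj]; exact ⟨h, by simpa using hx⟩, rfl, rfl⟩

theorem subdiv_lift {V : Type*} (G : SimpleGraph V) (u v : V) (c : Sym2 V → ℕ) {a b : V}
    (p : G.Walk a b) (hp : p.IsPath) :
    ∃ q : (G.subdivideEdge u v).Walk (some a) (some b), q.IsPath ∧
      (∀ e ∈ p.edges, ∃ e' ∈ q.edges, subdivColor u v c e' = c e) ∧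
      (none ∈ q.support → s(u, v) ∈ p.edges) ∧
      (∀ x, some x ∈ q.support → x ∈ p.support) := by
  induction p with
  | nil => exact ⟨Walk.nil, by simp, by simp, by simp, by simp⟩
  | @cons a y b h p ih =>
    rw [Walk.cons_isPath_iff] at hp
    obtain ⟨q, hq, hc, hn, hs⟩ := ih hp.1
    by_cases he : s(a, y) = s(u, v)
    · have hnp : s(u, v) ∉ p.edges := by
        rw [← he]
        intro hh
        exact hp.2 (p.fst_mem_support_of_mem_edges hh)
      have h1 : (G.subdivideEdge u v).Adj (some a) none :=
        (subdiv_adj_none G u v a (by rw [← he]; simp)).symm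
      have h2 : (G.subdivideEdge u v).Adj none (some y) :=
        subdiv_adj_none G u v y (by rw [← he]; simp)
      refine ⟨Walk.cons h1 (Walk.cons h2 q), ?_, ?_, ?_, ?_⟩
      · rw [Walk.cons_isPath_iff, Walk.cons_isPath_iff]
        refine ⟨⟨hq, fun hh => hnp (hn hh)⟩, ?_⟩
        simp only [Walk.support_cons, List.mem_cons, reduceCtorEq, false_or]
        exact fun hh => hp.2 (hs _ hh)
      · intro e hee
        simp only [Walk.edges_cons, List.mem_cons] at hee
        rcases hee with rfl | hee
        · exact ⟨s(none, some y), by simp, by rw [subdivColor_none, he]⟩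
        · obtain ⟨e', h', h''⟩ := hc e hee
          exact ⟨e', by simp [h'], h''⟩
      · intro _
        simp [he]
      · intro x hx
        simp only [Walk.support_cons, List.mem_cons, reduceCtorEq, false_or,
          Option.some.injEq] at hx ⊢
        exact hx.imp id (hs x)
    · have h1 := subdiv_adj_some G u v a y h he
      refine ⟨Walk.cons h1 q, ?_, ?_, ?_, ?_⟩
      · rw [Walk.cons_isPath_iff]
        exact ⟨hq, fun hh => hp.2 (hs _ hh)⟩
      · intro e hee
        simp only [Walk.edges_cons, List.mem_cons] at hee
        rcases hee with rfl | hee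
        · exact ⟨s(some a, some y), by simp, by rw [subdivColor_some]⟩
        · obtain ⟨e', h', h''⟩ := hc e hee
          exact ⟨e', by simp [h'], h''⟩
      · intro hx
        simp only [Walk.support_cons, List.mem_cons, reduceCtorEq, false_or] at hx
        simp [hn hx]
      · intro x hx
        simp only [Walk.support_cons, List.mem_cons, Option.some.injEq] at hx ⊢
        exact hx.imp id (hs x)

theorem subdiv_lift_none {V : Type*} (G : SimpleGraph V) (u v : V) (c : Sym2 V → ℕ) {a b : V}
    (ha : a ∈ s(u, v)) (p : G.Walk a b) (hp : p.IsPath) :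
    ∃ q : (G.subdivideEdge u v).Walk none (some b), q.IsPath ∧
      (∀ e ∈ p.edges, ∃ e' ∈ q.edges, subdivColor u v c e' = c e) := by
  by_cases hmem : s(u, v) ∈ p.edges
  · cases p with
    | nil => simp at hmem
    | @cons _ y _ h p =>
      rw [Walk.cons_isPath_iff] at hp
      have hnp : s(u, v) ∉ p.edges := fun hh =>
        hp.2 (p.mem_support_of_mem_edges hh ha)
      have he : s(a, y) = s(u, v) := by
        simp only [Walk.edges_cons, List.mem_cons] at hmem
        exact (hmem.resolve_right hnp).symm
      obtain ⟨q, hq, hc, hn, hs⟩ := subdiv_lift G u v c p hp.1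
      refine ⟨Walk.cons (subdiv_adj_none G u v y (by rw [← he]; simp)) q, ?_, ?_⟩
      · rw [Walk.cons_isPath_iff]
        exact ⟨hq, fun hh => hnp (hn hh)⟩
      · intro e hee
        simp only [Walk.edges_cons, List.mem_cons] at hee
        rcases hee with rfl | hee
        · exact ⟨s(none, some y), by simp, by rw [subdivColor_none, he]⟩
        · obtain ⟨e', h', h''⟩ := hc e hee
          exact ⟨e', by simp [h'], h''⟩
  · obtain ⟨q, hq, hc, hn, hs⟩ := subdiv_lift G u v c p hp
    refine ⟨Walk.cons (subdiv_adj_none G u v a ha) q, ?_, ?_⟩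
    · rw [Walk.cons_isPath_iff]
      exact ⟨hq, fun hh => hmem (hn hh)⟩
    · intro e hee
      obtain ⟨e', h', h''⟩ := hc e hee
      exact ⟨e', by simp [h'], h''⟩

theorem subdiv_card {A B : Type*} (l : List A) (m : List B) (f : A → ℕ) (g : B → ℕ) (k : ℕ)
    (hk : k ≤ (l.map f).toFinset.card) (h : ∀ e ∈ l, ∃ e' ∈ m, g e' = f e) :
    k ≤ (m.map g).toFinset.card := by
  refine hk.trans (Finset.card_le_card ?_)
  intro x hx
  simp only [List.mem_toFinset, List.mem_map] at hx ⊢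
  obtain ⟨e, he, rfl⟩ := hx
  exact h e he

theorem subdiv_connecting {V : Type*} (G : SimpleGraph V) (k : ℕ) (u v : V) (huv : G.Adj u v)
    (c : Sym2 V → ℕ) (hc : G.IsKColorConnecting k c) :
    (G.subdivideEdge u v).IsKColorConnecting k (subdivColor u v c) := by
  have key : ∀ x : V, ∃ q : (G.subdivideEdge u v).Walk none (some x), q.IsPath ∧
      k ≤ (q.edges.map (subdivColor u v c)).toFinset.card := by
    intro x
    obtain ⟨a, ha, hax⟩ : ∃ a, a ∈ s(u, v) ∧ a ≠ x := by
      by_cases hx : u = x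
      · exact ⟨v, by simp, fun h => huv.ne (hx.trans h.symm)⟩
      · exact ⟨u, by simp, hx⟩
    obtain ⟨p, hp, hpk⟩ := hc a x hax
    obtain ⟨q, hq, hqc⟩ := subdiv_lift_none G u v c ha p hp
    exact ⟨q, hq, subdiv_card _ _ _ _ k hpk hqc⟩
  intro x y hxy
  rcases x with _ | x <;> rcases y with _ | y
  · exact absurd rfl hxy
  · exact key y
  · obtain ⟨q, hq, hqk⟩ := key x
    refine ⟨q.reverse, hq.reverse, ?_⟩
    exact subdiv_card _ _ _ _ k hqk (fun e he => ⟨e, by simpa using he, rfl⟩)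
  · obtain ⟨p, hp, hpk⟩ := hc x y (fun h => hxy (by rw [h]))
    obtain ⟨q, hq, hqc, -, -⟩ := subdiv_lift G u v c p hp
    exact ⟨q, hq, subdiv_card _ _ _ _ k hpk hqc⟩

theorem subdiv_image {V : Type*} (G : SimpleGraph V) (u v : V) (huv : G.Adj u v)
    (c : Sym2 V → ℕ) :
    subdivColor u v c '' (G.subdivideEdge u v).edgeSet ⊆ c '' G.edgeSet := by
  rintro _ ⟨e, he, rfl⟩
  induction e using Sym2.ind with
  | _ x y =>
    rcases x with _ | x
    · exact ⟨s(u, v), huv, (subdivColor_none u v c y).symm⟩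
    rcases y with _ | y
    · exact ⟨s(u, v), huv, by rw [Sym2.eq_swap (a := some x), subdivColor_none]⟩
    refine ⟨s(x, y), ?_, (subdivColor_some u v c x y).symm⟩
    rw [SimpleGraph.mem_edgeSet] at he ⊢
    unfold SimpleGraph.subdivideEdge at he
    rw [SimpleGraph.sup_adj, SimpleGraph.map_adj] at he
    rcases he with ⟨x', y', h, hx, hy⟩ | h
    · rw [SimpleGraph.deleteEdges_adj] at h
      simp only [Function.Embedding.some_apply, Option.some.injEq] at hx hy
      subst hx hy
      exact h.1
    · simp at h

theorem stmt_7 {V : Type*} [Fintype V] (G : SimpleGraph V) (k : ℕ) (hk : 2 ≤ k)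
    (u v : V) (huv : G.Adj u v) (h : G.KColorConnectable k) :
    (G.subdivideEdge u v).KColorConnectable k ∧
    (G.subdivideEdge u v).ccConn k ≤ G.ccConn k := by
  obtain ⟨c₀, hc₀⟩ := h
  refine ⟨⟨_, subdiv_connecting G k u v huv c₀ hc₀⟩, ?_⟩
  have hne : {n : ℕ | ∃ c : Sym2 V → ℕ, G.IsKColorConnecting k c ∧
      (c '' G.edgeSet).ncard = n}.Nonempty := ⟨_, c₀, hc₀, rfl⟩
  obtain ⟨c, hc, hn⟩ := Nat.sInf_mem hne
  have h1 : (G.subdivideEdge u v).ccConn k ≤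
      (subdivColor u v c '' (G.subdivideEdge u v).edgeSet).ncard :=
    Nat.sInf_le ⟨_, subdiv_connecting G k u v huv c hc, rfl⟩
  have h2 := Set.ncard_le_ncard (subdiv_image G u v huv c) (Set.toFinite _)
  exact (h1.trans h2).trans hn.le
end

section
/- For all integers 3 ≤ k ≤ t ≤ n, every wheel-like graph W_n^t satisfies cc_k(W_n^t) = k. -/
open SimpleGraph

/-- `G` is a wheel-like graph `W n t`: it consists of a cycle of length `n` together with
a new vertex `v₀` (not on the cycle) joined to `t` distinct vertices of the cycle by `t`
paths which pairwise share only the vertex `v₀` and are internally disjoint from the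
cycle, and `G` has no further vertices or edges. -/
inductive SimpleGraph.IsWheelLike {V : Type*} (G : SimpleGraph V) (n t : ℕ) : Prop
  | mk (v₀ x : V) (c : G.Walk x x) (hc : c.IsCycle) (hn : c.length = n)
      (a : Fin t → V) (hainj : Function.Injective a) (haC : ∀ i, a i ∈ c.support)
      (p : ∀ i : Fin t, G.Walk v₀ (a i)) (hp : ∀ i, (p i).IsPath)
      (hv₀ : v₀ ∉ c.support)
      (hint : ∀ i, ∀ w ∈ (p i).support, w ≠ v₀ → w ≠ a i → w ∉ c.support)
      (hdisj : ∀ i j, i ≠ j → ∀ w ∈ (p i).support, w ∈ (p j).support → w = v₀)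
      (hverts : ∀ w : V, w ∈ c.support ∨ ∃ i, w ∈ (p i).support)
      (hedges : ∀ e : Sym2 V, e ∈ G.edgeSet ↔ e ∈ c.edges ∨ ∃ i, e ∈ (p i).edges) :
      IsWheelLike G n t

/-- There is a path from `u` to `v` inside `S` whose edges see all labels in `L`. -/
def Rch {V T : Type*} (G : SimpleGraph V) (R : Sym2 V → T → Prop) (u v : V) (S : Set V)
    (L : Set T) : Prop :=
  ∃ p : G.Walk u v, p.IsPath ∧ (∀ w ∈ p.support, w ∈ S) ∧ ∀ l ∈ L, ∃ e ∈ p.edges, R e l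

section Rch
variable {V T : Type*} {G : SimpleGraph V} {R : Sym2 V → T → Prop}

theorem Rch.refl (u : V) : Rch G R u u {u} ∅ :=
  ⟨Walk.nil, by simp, by simp, by simp⟩

theorem Rch.symm {u v : V} {S : Set V} {L : Set T} (h : Rch G R u v S L) : Rch G R v u S L := by
  obtain ⟨p, hp, hS, hL⟩ := h
  exact ⟨p.reverse, hp.reverse, by simpa using hS, by simpa using hL⟩

theorem Rch.mono {u v : V} {S S' : Set V} {L L' : Set T} (h : Rch G R u v S L) (hS : S ⊆ S')
    (hL : L' ⊆ L) : Rch G R u v S' L' := by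
  obtain ⟨p, hp, h1, h2⟩ := h
  exact ⟨p, hp, fun w hw => hS (h1 w hw), fun l hl => h2 l (hL hl)⟩

theorem Rch.step {u v : V} (h : G.Adj u v) : Rch G R u v {u, v} {l | R s(u, v) l} := by
  refine ⟨Walk.cons h Walk.nil, ?_, by simp, by simp⟩
  simp [h.ne]

theorem Rch.comp {u v w : V} {S S' : Set V} {L L' : Set T} (h : Rch G R u v S L)
    (h' : Rch G R v w S' L') (hd : ∀ x ∈ S, x ∈ S' → x = v) :
    Rch G R u w (S ∪ S') (L ∪ L') := by
  obtain ⟨p, hp, h1, h2⟩ := h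
  obtain ⟨q, hq, h3, h4⟩ := h'
  refine ⟨p.append q, ?_, ?_, ?_⟩
  · rw [Walk.isPath_def, Walk.support_append]
    have hq' := hq.support_nodup
    rw [Walk.support_eq_cons] at hq'
    refine List.Nodup.append hp.support_nodup (List.nodup_cons.1 hq').2 ?_
    intro x hx hx'
    have : x = v := hd x (h1 x hx) (h3 x (List.mem_of_mem_tail hx'))
    subst this
    exact (List.nodup_cons.1 hq').1 hx'
  · intro x hx
    rw [Walk.mem_support_append_iff] at hx
    exact hx.imp (h1 x) (h3 x)
  · rintro l (hl | hl)
    · obtain ⟨e, he, hr⟩ := h2 l hl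
      exact ⟨e, by simp [he], hr⟩
    · obtain ⟨e, he, hr⟩ := h4 l hl
      exact ⟨e, by simp [he], hr⟩

theorem Rch.chain (z : ℕ → V) (d : ℕ) (a : ℕ)
    (hadj : ∀ j, a ≤ j → j < a + d → G.Adj (z j) (z (j + 1)))
    (hinj : ∀ i j, a ≤ i → i < j → j ≤ a + d → z i ≠ z j) :
    Rch G R (z a) (z (a + d)) {w | ∃ j, a ≤ j ∧ j ≤ a + d ∧ w = z j}
      {l | ∃ j, a ≤ j ∧ j < a + d ∧ R s(z j, z (j + 1)) l} := by
  induction d with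
  | zero =>
    refine (Rch.refl (z a)).mono ?_ ?_
    · rintro w rfl
      exact ⟨a, le_rfl, le_rfl, rfl⟩
    · rintro l ⟨j, h1, h2, _⟩
      omega
  | succ d ih =>
    have h1 := ih (fun j h h' => hadj j h (by omega)) (fun i j h h' h'' => hinj i j h h' (by omega))
    have h2 : Rch G R _ _ _ _ := Rch.step (R := R) (hadj (a + d) (by omega) (by omega))
    refine (h1.comp h2 ?_).mono ?_ ?_
    · rintro x ⟨j, hj1, hj2, rfl⟩ (h | h)
      · exact h
      · exact absurd h (hinj _ _ hj1 (by omega) (by omega))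
    · rintro x (⟨j, hj1, hj2, rfl⟩ | h | h)
      · exact ⟨j, hj1, by omega, rfl⟩
      · exact ⟨a + d, by omega, by omega, h⟩
      · exact ⟨a + d + 1, by omega, by omega, h⟩
    · rintro l ⟨j, hj1, hj2, hR⟩
      by_cases hj : j < a + d
      · exact Or.inl ⟨j, hj1, hj, hR⟩
      · obtain rfl : j = a + d := by omega
        exact Or.inr hR

end Rch

/-- The edge entering position `s` of the cycle has label `l`. -/
def Spec {V : Type*} {t : ℕ} (n : ℕ) (y : ℤ → V) (a : Fin t → V) (s r : ℤ) (l : Fin t) : Prop :=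
  r < s ∧ s ≤ r + n ∧ y r = a l ∧ ∀ x, r < x → x < s → ∀ i, y x ≠ a i

/-- The edge `e` has label `l`. -/
def Lbl {V : Type*} {t : ℕ} (n : ℕ) (y : ℤ → V) (z : Fin t → ℕ → V) (m : Fin t → ℕ)
    (e : Sym2 V) (l : Fin t) : Prop :=
  (∃ j, j < m l ∧ e = s(z l j, z l (j + 1))) ∨
    ∃ s r, Spec n y (fun i => z i (m i)) s r l ∧ e = s(y (s - 1), y s)

theorem core {V : Type*} (G : SimpleGraph V) (n t : ℕ) (hn : 3 ≤ n) (ht : 2 ≤ t) (v₀ : V)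
    (y : ℤ → V) (z : Fin t → ℕ → V) (m : Fin t → ℕ)
    (hyadj : ∀ s, G.Adj (y s) (y (s + 1)))
    (hy : ∀ s r, y s = y r ↔ (n : ℤ) ∣ s - r)
    (hzadj : ∀ i j, j < m i → G.Adj (z i j) (z i (j + 1)))
    (hzinj : ∀ i j j', j ≤ m i → j' ≤ m i → z i j = z i j' → j = j')
    (hz0 : ∀ i, z i 0 = v₀)
    (hzd : ∀ i i', i ≠ i' → ∀ j j', j ≤ m i → j' ≤ m i' → z i j = z i' j' → j = 0)
    (hzc : ∀ i j s, j ≤ m i → z i j = y s → j = m i)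
    (hze : ∀ i, ∃ s, z i (m i) = y s)
    (hv₀ : ∀ s, v₀ ≠ y s)
    (hcov : ∀ w, (∃ s, w = y s) ∨ ∃ i j, j ≤ m i ∧ w = z i j) :
    ∃ col : Sym2 V → Fin t, ∀ u v, u ≠ v → ∃ p : G.Walk u v, p.IsPath ∧
      ∀ l, ∃ e ∈ p.edges, col e = l := by
  classical
  have hm : ∀ i, 0 < m i := by
    intro i
    rcases Nat.eq_zero_or_pos (m i) with h | h
    · obtain ⟨s, hs⟩ := hze i
      rw [h, hz0] at hs
      exact absurd hs (hv₀ s)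
    · exact h
  have hainj : ∀ i i', z i (m i) = z i' (m i') → i = i' := by
    intro i i' h
    by_contra hne
    have := hzd i i' hne _ _ le_rfl le_rfl h
    have := hm i
    omega
  have hper : ∀ s d : ℤ, y (s + n * d) = y s := fun s d => (hy _ _).2 ⟨d, by ring⟩
  -- functionality of labels
  have hfun : ∀ e l l', Lbl n y z m e l → Lbl n y z m e l' → l = l' := by
    intro e l l' h h'
    rcases h with ⟨j, hj, rfl⟩ | ⟨s, r, ⟨h1, h2, h3, h4⟩, rfl⟩
    · rcases h' with ⟨j', hj', he⟩ | ⟨s, r, _, he⟩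
      · by_contra hne
        rw [Sym2.eq_iff] at he
        rcases he with ⟨_, he⟩ | ⟨_, he⟩
        · have := hzd l l' hne _ _ (by omega) (by omega) he
          omega
        · have := hzd l l' hne _ _ (by omega) (by omega) he
          omega
      · rw [Sym2.eq_iff] at he
        rcases he with ⟨he, _⟩ | ⟨he, _⟩
        · have := hzc l j _ (by omega) he
          omega
        · have := hzc l j _ (by omega) he
          omega
    · rcases h' with ⟨j', hj', he⟩ | ⟨s', r', ⟨h1', h2', h3', h4'⟩, he⟩
      · rw [Sym2.eq_iff] at he
        rcases he with ⟨he, _⟩ | ⟨_, he⟩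
        · have := hzc _ j' _ (by omega) he.symm
          omega
        · have := hzc _ j' _ (by omega) he.symm
          omega
      · rw [Sym2.eq_iff] at he
        rcases he with ⟨_, he⟩ | ⟨he, he'⟩
        · rw [hy] at he
          obtain ⟨d, hd⟩ := he
          have e1 : r' + n * d = r := by
            rcases lt_trichotomy (r' + n * d) r with h | h | h
            · exfalso
              refine h4' (r + n * (-d)) ?_ ?_ l ?_
              · linarith
              · linarith
              · rw [hper, h3]
            · exact h
            · exfalso
              refine h4 (r' + n * d) h ?_ l' ?_
              · linarith
              · rw [hper, h3']
          apply hainj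
          simp only at h3 h3'
          rw [← h3, ← h3', ← e1, hper]
        · rw [hy] at he he'
          have : (n : ℤ) ∣ 2 := by
            have := dvd_sub he' he
            have e : s - (s' - 1) - (s - 1 - s') = 2 := by ring
            rwa [e] at this
          have := Int.le_of_dvd (by norm_num) this
          omega
  -- it suffices to find label-full paths
  suffices key : ∀ u v, u ≠ v → ∃ S, Rch G (Lbl n y z m) u v S Set.univ by
    refine ⟨fun e => if h : ∃ l, Lbl n y z m e l then h.choose else ⟨0, by omega⟩, ?_⟩
    intro u v huv
    obtain ⟨S, p, hp, _, hl⟩ := key u v huv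
    refine ⟨p, hp, fun l => ?_⟩
    obtain ⟨e, he, hr⟩ := hl l trivial
    refine ⟨e, he, ?_⟩
    have hex : ∃ l, Lbl n y z m e l := ⟨l, hr⟩
    simp only [hex, dif_pos]
    exact hfun e _ _ hex.choose_spec hr
  have hrep : ∀ x s : ℤ, ∃ q, s ≤ q ∧ q < s + n ∧ y q = y x := by
    intro x s
    have hn0 : (0 : ℤ) < n := by omega
    refine ⟨s + (x - s) % n, ?_, ?_, ?_⟩
    · have := Int.emod_nonneg (x - s) hn0.ne'
      omega
    · have := Int.emod_lt_of_pos (x - s) hn0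
      omega
    · rw [hy]
      refine ⟨-((x - s) / n), ?_⟩
      have := Int.emod_add_mul_ediv (x - s) n
      linarith
  have hpos : ∀ (l : Fin t) (s : ℤ), ∃ q, s ≤ q ∧ q < s + n ∧ y q = z l (m l) := by
    intro l s
    obtain ⟨x, hx⟩ := hze l
    rw [hx]
    exact hrep x s
  have hprev : ∀ s, ∃ r l, Spec n y (fun i => z i (m i)) s r l := by
    intro s
    obtain ⟨q, hq1, hq2, hq3⟩ := hpos ⟨0, by omega⟩ (s - n)
    obtain ⟨r, ⟨⟨h1, l, h2⟩, h3⟩⟩ := Int.exists_greatest_of_bdd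
      (P := fun r => r < s ∧ ∃ l, y r = z l (m l)) ⟨s, fun r hr => hr.1.le⟩
      ⟨q, by omega, _, hq3⟩
    refine ⟨r, l, h1, ?_, h2, ?_⟩
    · have := h3 q ⟨by omega, _, hq3⟩
      omega
    · intro x hx hx' i hi
      have := h3 x ⟨hx', i, hi⟩
      omega
  -- arcs
  have harc : ∀ r s : ℤ, r ≤ s → s < r + n →
      Rch G (Lbl n y z m) (y r) (y s) {w | ∃ x, r ≤ x ∧ x ≤ s ∧ w = y x}
        {l | ∃ x, r ≤ x ∧ x < s ∧ y x = z l (m l)} := by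
    intro r s hrs hsn
    obtain ⟨d, rfl⟩ := Int.le.dest hrs
    have h := Rch.chain (G := G) (R := Lbl n y z m) (fun j : ℕ => y (r + j)) d 0
      (by
        intro j _ _
        have := hyadj (r + j)
        simpa [add_assoc] using this)
      (by
        intro i j _ h1 h2 he
        rw [hy] at he
        obtain ⟨k, hk⟩ := he
        have hk1 : k < 0 := by
          by_contra hk1
          have : (0 : ℤ) ≤ n * k := by
            apply mul_nonneg <;> omega
          omega
        have : (n : ℤ) * k ≤ n * (-1) := by
          apply mul_le_mul_of_nonneg_left <;> omega
        omega)
    simp only [zero_add, Nat.cast_zero, add_zero] at h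
    refine h.mono ?_ ?_
    · rintro w ⟨j, _, hj, rfl⟩
      exact ⟨r + j, by omega, by omega, rfl⟩
    · rintro l ⟨x, hx1, hx2, hx⟩
      obtain ⟨j, rfl⟩ := Int.le.dest hx1
      refine ⟨j, by omega, by omega, Or.inr ⟨r + j + 1, r + j, ⟨by omega, by omega, hx, ?_⟩, ?_⟩⟩
      · intro x h1 h2
        omega
      · have e : r + (j : ℤ) + 1 - 1 = r + j := by ring
        rw [e]
        simp [add_assoc]
  -- pieces of spokes
  have hspk : ∀ i j j', j ≤ j' → j' ≤ m i →
      Rch G (Lbl n y z m) (z i j) (z i j') {w | ∃ x, j ≤ x ∧ x ≤ j' ∧ w = z i x}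
        {l | j < j' ∧ l = i} := by
    intro i j j' h1 h2
    obtain ⟨d, rfl⟩ := Nat.le.dest h1
    have h := Rch.chain (G := G) (R := Lbl n y z m) (z i) d j
      (fun x _ hx => hzadj i x (by omega))
      (fun x x' _ hx hx' he => by
        have := hzinj i x x' (by omega) (by omega) he
        omega)
    refine h.mono le_rfl ?_
    rintro l ⟨hl, rfl⟩
    exact ⟨j, le_rfl, hl, Or.inl ⟨j, by omega, rfl⟩⟩
  -- extension by the long arc
  have hext : ∀ w i s r S, Spec n y (fun i => z i (m i)) s r i →
      Rch G (Lbl n y z m) w (z i (m i)) S {i} → (∀ x, y x ∈ S → y x = z i (m i)) →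
      Rch G (Lbl n y z m) w (y s) (S ∪ {v | ∃ x, v = y x}) Set.univ := by
    intro w i s r S ⟨h1, h2, h3, h4⟩ hR hS
    have ha := (harc (s - n) r (by omega) (by omega)).symm
    have hs : y (s - n) = y s := by
      rw [hy]
      exact ⟨-1, by ring⟩
    rw [hs] at ha
    simp only at h3
    rw [← h3] at hR
    refine (hR.comp ha ?_).mono ?_ ?_
    · rintro x hx ⟨q, _, _, rfl⟩
      rw [h3]
      exact hS q hx
    · rintro x (hx | ⟨q, _, _, rfl⟩)
      · exact Or.inl hx
      · exact Or.inr ⟨q, rfl⟩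
    · intro l _
      obtain ⟨q, hq1, hq2, hq⟩ := hpos l (s - n)
      rcases lt_trichotomy q r with h | h | h
      · exact Or.inr ⟨q, hq1, h, hq⟩
      · left
        subst h
        exact hainj l i (hq.symm.trans h3)
      · exact absurd hq (h4 q h (by omega) l)
  -- from a spoke vertex to the attachment point of spoke `i`
  have hsp : ∀ k j i, j < m k → ∃ S, Rch G (Lbl n y z m) (z k j) (z i (m i)) S {i} ∧
      (∀ x, y x ∈ S → y x = z i (m i)) ∧
      (∀ x ∈ S, (∃ q, q ≤ m i ∧ x = z i q) ∨ (k ≠ i ∧ ∃ q, q ≤ j ∧ x = z k q)) := by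
    intro k j i hj
    by_cases hki : k = i
    · subst hki
      refine ⟨_, (hspk k j (m k) hj.le le_rfl).mono le_rfl ?_, ?_, ?_⟩
      · rintro l rfl
        exact ⟨hj, rfl⟩
      · rintro x ⟨q, _, hq, he⟩
        rw [he, hzc k q x hq he.symm]
      · rintro x ⟨q, _, hq, he⟩
        exact Or.inl ⟨q, hq, he⟩
    · have h1 := (hspk k 0 j (by omega) hj.le).symm
      have h2 := hspk i 0 (m i) (by omega) le_rfl
      rw [hz0] at h1 h2
      refine ⟨_, (h1.comp h2 ?_).mono le_rfl ?_, ?_, ?_⟩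
      · rintro x ⟨q, _, hq, rfl⟩ ⟨q', _, hq', he⟩
        rw [hzd k i hki q q' (by omega) hq' he, hz0]
      · rintro l rfl
        exact Or.inr ⟨hm _, rfl⟩
      · rintro x (⟨q, _, hq, he⟩ | ⟨q, _, hq, he⟩)
        · have := hzc k q x (by omega) he.symm
          omega
        · rw [he, hzc i q x hq he.symm]
      · rintro x (⟨q, _, hq, he⟩ | ⟨q, _, hq, he⟩)
        · exact Or.inr ⟨hki, q, hq, he⟩
        · exact Or.inl ⟨q, hq, he⟩
  -- spoke vertex to cycle vertex
  have hSC : ∀ k j s, j < m k → ∃ S, Rch G (Lbl n y z m) (z k j) (y s) S Set.univ := by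
    intro k j s hj
    obtain ⟨r, i, hr⟩ := hprev s
    obtain ⟨S, h1, h2, _⟩ := hsp k j i hj
    exact ⟨_, hext _ i s r S hr h1 h2⟩
  -- spoke vertex to spoke vertex
  have hSS : ∀ k j k' j', j < m k → j' < m k' → 0 < j' → (k = k' → j < j') →
      ∃ S, Rch G (Lbl n y z m) (z k j) (z k' j') S Set.univ := by
    intro k j k' j' hj hj' hj0 hlt
    obtain ⟨s, hs⟩ := hze k'
    obtain ⟨r, i, hr⟩ := hprev s
    obtain ⟨S, h1, h2, h3⟩ := hsp k j i hj
    have hik : i ≠ k' := by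
      rintro rfl
      obtain ⟨h1, h2, h3, h4⟩ := hr
      simp only at h3
      -- then `r = s - n`, and another attachment lies strictly between
      have hex : ∃ i' : Fin t, i' ≠ i := by
        by_cases h0 : i = ⟨0, by omega⟩
        · exact ⟨⟨1, by omega⟩, by rw [h0]; simp⟩
        · exact ⟨⟨0, by omega⟩, fun h => h0 h.symm⟩
      obtain ⟨i', hi'⟩ := hex
      have hd : (n : ℤ) ∣ s - r := by
        rw [← hy, h3, hs]
      have := Int.le_of_dvd (by omega) hd
      obtain ⟨q, hq1, hq2, hq⟩ := hpos i' r
      rcases hq1.eq_or_lt with h | h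
      · subst h
        exact hi' (hainj _ _ (hq.symm.trans h3))
      · exact h4 q h (by omega) i' hq
    have h4 := hext _ i s r S hr h1 h2
    have h5 := (hspk k' j' (m k') hj'.le le_rfl).symm
    rw [hs] at h5
    refine ⟨_, (h4.comp h5 ?_).mono le_rfl (fun l _ => Or.inl trivial)⟩
    rintro x (hx | ⟨q, hq⟩) ⟨q', hq1, hq2, hx'⟩
    · exfalso
      rcases h3 x hx with ⟨q, hq, he⟩ | ⟨hki, q, hq, he⟩
      · have := hzd k' i hik.symm q' q hq2 hq (hx'.symm.trans he)
        omega
      · by_cases hkk : k = k'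
        · subst hkk
          have := hzinj k q' q hq2 (by omega) (hx'.symm.trans he)
          have := hlt rfl
          omega
        · have := hzd k' k (Ne.symm hkk) q' q hq2 (by omega) (hx'.symm.trans he)
          omega
    · rw [hx', hzc k' q' q hq2 (hx'.symm.trans hq), hs]
  -- cycle vertex to cycle vertex
  have hCC : ∀ s s' : ℤ, s < s' → s' < s + n →
      ∃ S, Rch G (Lbl n y z m) (y s) (y s') S Set.univ := by
    intro s s' hss hsn
    obtain ⟨r, i, h1, h2, h3, h4⟩ := hprev s
    obtain ⟨r', i', h1', h2', h3', h4'⟩ := hprev s'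
    simp only at h3 h3' h4 h4'
    have hs' : y (s' - n) = y s' := by
      rw [hy]
      exact ⟨-1, by ring⟩
    have hsn' : y (s + n) = y s := by
      rw [hy]
      exact ⟨1, by ring⟩
    have hrn : y (r + n) = y r := by
      rw [hy]
      exact ⟨1, by ring⟩
    by_cases hA : r' < s
    · have ha := (harc (s' - n) s (by omega) (by omega)).symm
      rw [hs'] at ha
      refine ⟨_, ha.mono le_rfl ?_⟩
      intro l _
      obtain ⟨q, hq1, hq2, hq⟩ := hpos l (s' - n)
      refine ⟨q, hq1, ?_, hq⟩
      by_contra hqs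
      exact h4' q (by omega) (by omega) l hq
    · by_cases hB : r + n < s'
      · have ha := harc s s' (by omega) (by omega)
        refine ⟨_, ha.mono le_rfl ?_⟩
        intro l _
        obtain ⟨q, hq1, hq2, hq⟩ := hpos l s
        refine ⟨q, hq1, ?_, hq⟩
        by_contra hqs
        refine h4 (q - n) (by omega) (by omega) l ?_
        rw [← hq, hy]
        exact ⟨-1, by ring⟩
      · have hii : i' ≠ i := by
          rintro rfl
          have : (n : ℤ) ∣ r + n - r' := by
            rw [← hy, hrn, h3, h3']
          have := Int.le_of_dvd (by omega) this
          omega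
        have a1 := harc s r' (by omega) (by omega)
        have a2 := (harc s' (r + n) (by omega) (by omega)).symm
        have b1 := (hspk i' 0 (m i') (by omega) le_rfl).symm
        have b2 := hspk i 0 (m i) (by omega) le_rfl
        rw [hz0] at b1 b2
        have b := b1.comp b2 (by
          rintro x ⟨q, _, hq, rfl⟩ ⟨q', _, hq', he⟩
          rw [hzd _ _ hii q q' hq hq' he, hz0])
        rw [← h3', ← h3, ← hrn] at b
        have ab := a1.comp b (by
          rintro x ⟨q, hq1, hq2, hq⟩ (⟨p, _, hp, he⟩ | ⟨p, _, hp, he⟩)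
          · rw [he, hzc i' p q hp (he.symm.trans hq), h3']
          · exfalso
            have := hzc i p q hp (he.symm.trans hq)
            subst this
            have : (n : ℤ) ∣ r + n - q := by
              rw [← hy, hrn, h3, ← hq, he]
            have := Int.le_of_dvd (by omega) this
            omega)
        have abc := ab.comp a2 (by
          rintro x (⟨q, hq1, hq2, hq⟩ | ⟨p, _, hp, he⟩ | ⟨p, _, hp, he⟩) ⟨q', hq1', hq2', hq'⟩
          · exfalso
            have : (n : ℤ) ∣ q' - q := by
              rw [← hy, ← hq, ← hq']
            have := Int.le_of_dvd (by omega) this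
            omega
          · exfalso
            have := hzc i' p q' hp (he.symm.trans hq')
            subst this
            have : (n : ℤ) ∣ q' - r' := by
              rw [← hy, h3', ← hq', he]
            have := Int.le_of_dvd (by omega) this
            omega
          · rw [he, hzc i p q' hp (he.symm.trans hq'), hrn, h3])
        refine ⟨_, abc.mono le_rfl ?_⟩
        intro l _
        obtain ⟨q, hq1, hq2, hq⟩ := hpos l s
        by_cases c1 : q < r'
        · exact Or.inl (Or.inl ⟨q, hq1, c1, hq⟩)
        by_cases c2 : q = r'
        · subst c2
          exact Or.inl (Or.inr (Or.inl ⟨hm _, hainj _ _ (hq.symm.trans h3')⟩))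
        by_cases c3 : q < s'
        · exact absurd hq (h4' q (by omega) c3 l)
        by_cases c4 : q < r + n
        · exact Or.inr ⟨q, by omega, c4, hq⟩
        by_cases c5 : q = r + n
        · subst c5
          exact Or.inl (Or.inr (Or.inr ⟨hm _, hainj _ _ (by rw [← hq, hrn, h3])⟩))
        exfalso
        refine h4 (q - n) (by omega) (by omega) l ?_
        rw [← hq, hy]
        exact ⟨-1, by ring⟩
  -- combine
  have hcov' : ∀ w, (∃ s, w = y s) ∨ ∃ i j, j < m i ∧ w = z i j := by
    intro w
    rcases hcov w with h | ⟨i, j, hj, rfl⟩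
    · exact Or.inl h
    · rcases hj.eq_or_lt with h | h
      · left
        rw [h]
        exact hze i
      · exact Or.inr ⟨i, j, h, rfl⟩
  intro u v huv
  rcases hcov' u with ⟨s, rfl⟩ | ⟨i, j, hj, rfl⟩ <;> rcases hcov' v with ⟨s', rfl⟩ | ⟨i', j', hj', rfl⟩
  · obtain ⟨q, hq1, hq2, hq⟩ := hrep s' s
    rw [← hq] at huv ⊢
    rcases hq1.eq_or_lt with h | h
    · exact absurd (by rw [h]) huv
    · exact hCC s q h hq2
  · obtain ⟨S, h⟩ := hSC i' j' s hj'
    exact ⟨S, h.symm⟩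
  · exact hSC i j s' hj
  · by_cases h0 : 0 < j' ∧ (i = i' → j < j')
    · exact hSS i j i' j' hj hj' h0.1 h0.2
    · have h1 : 0 < j ∧ (i' = i → j' < j) := by
        by_cases hii : i = i'
        · subst hii
          have : j ≠ j' := by
            rintro rfl
            exact huv rfl
          simp only [true_imp_iff] at h0 ⊢
          omega
        · have h00 : j' = 0 := by
            by_contra h'
            exact h0 ⟨by omega, fun h => absurd h hii⟩
          refine ⟨?_, fun h => absurd h.symm hii⟩
          rcases Nat.eq_zero_or_pos j with h | h
          · subst h h00
            exact absurd (by rw [hz0, hz0]) huv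
          · exact h
      obtain ⟨S, h⟩ := hSS i' j' i j hj' hj h1.1 h1.2
      exact ⟨S, h.symm⟩

theorem stmt_10 {V : Type*} (G : SimpleGraph V) (n t k : ℕ)
    (hk : 3 ≤ k) (hkt : k ≤ t) (htn : t ≤ n) (h : G.IsWheelLike n t) :
    G.KColorConnectable k ∧ G.ccConn k = k := by
  classical
  obtain ⟨v₀, x, c, hc, hn, a, hainj, haC, p, hp, hv₀, hint, hdisj, hverts, hedges⟩ := h
  have hn0 : (0 : ℤ) < n := by omega
  have hfin : G.edgeSet.Finite := by
    have : G.edgeSet ⊆ {e | e ∈ c.edges} ∪ ⋃ i, {e | e ∈ (p i).edges} := by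
      intro e he
      rcases (hedges e).1 he with h | ⟨i, h⟩
      · exact Or.inl h
      · exact Or.inr (Set.mem_iUnion.2 ⟨i, h⟩)
    refine Set.Finite.subset (Set.Finite.union (List.finite_toSet _)
      (Set.finite_iUnion fun i => List.finite_toSet _)) this
  let y : ℤ → V := fun s => c.getVert (s % n).toNat
  have hymem : ∀ s, y s ∈ c.support := fun s => c.getVert_mem_support _
  have hysurj : ∀ w ∈ c.support, ∃ s, w = y s := by
    intro w hw
    obtain ⟨j, hj, hjl⟩ := Walk.mem_support_iff_exists_getVert.1 hw
    rcases hjl.eq_or_lt with h | h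
    · refine ⟨0, ?_⟩
      simp only [y]
      rw [← hj, h]
      simp
    · refine ⟨j, ?_⟩
      simp only [y]
      rw [Int.emod_eq_of_lt (by omega) (by omega), ← hj]
      simp
  have hend : ∀ i, (p i).getVert (p i).length = a i := fun i => (p i).getVert_length
  obtain ⟨col, hcol⟩ := core G n t (by omega) (by omega) v₀ y (fun i => (p i).getVert)
    (fun i => (p i).length)
    (by
      intro s
      have h1 := Int.emod_nonneg s hn0.ne'
      have h2 := Int.emod_lt_of_pos s hn0
      have h3 := c.adj_getVert_succ (i := (s % n).toNat) (by omega)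
      have h4 : y (s + 1) = c.getVert ((s % n).toNat + 1) := by
        simp only [y]
        by_cases h5 : s % n + 1 = n
        · have e1 : (s + 1) % n = 0 := by
            rw [Int.add_emod, ← Int.emod_emod_of_dvd s (dvd_refl (n : ℤ)), Int.emod_emod_of_dvd _ (dvd_refl (n : ℤ))]
            rw [← Int.add_emod]
            rw [← Int.emod_add_emod, h5, Int.emod_self]
          have e2 : (s % n).toNat + 1 = c.length := by omega
          rw [e1, e2]
          simp
        · have e1 : (s + 1) % n = s % n + 1 := by
            rw [← Int.emod_add_emod]
            exact Int.emod_eq_of_lt (by omega) (by omega)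
          rw [e1]
          congr 1
          omega
      rw [h4]
      exact h3)
    (by
      intro s r
      have h1 := Int.emod_nonneg s hn0.ne'
      have h2 := Int.emod_lt_of_pos s hn0
      have h3 := Int.emod_nonneg r hn0.ne'
      have h4 := Int.emod_lt_of_pos r hn0
      constructor
      · intro he
        have := hc.getVert_injOn' (by simp; omega) (by simp; omega) he
        apply Int.dvd_of_emod_eq_zero
        apply Int.emod_eq_emod_iff_emod_sub_eq_zero.1
        omega
      · intro hd
        have := Int.emod_eq_emod_iff_emod_sub_eq_zero.2 (Int.emod_eq_zero_of_dvd hd)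
        simp only [y]
        rw [this])
    (fun i j hj => (p i).adj_getVert_succ hj)
    (fun i j j' hj hj' he => (hp i).getVert_injOn hj hj' he)
    (fun i => (p i).getVert_zero)
    (by
      intro i i' hne j j' hj hj' he
      have h1 := hdisj i i' hne _ ((p i).getVert_mem_support j)
        (by rw [he]; exact (p i').getVert_mem_support j')
      exact (hp i).getVert_injOn (by simpa using hj) (by simp) (by rw [h1]; simp))
    (by
      intro i j s hj he
      by_contra hne
      refine hint i _ ((p i).getVert_mem_support j) ?_ ?_ (by rw [he]; exact hymem s)
      · intro h
        rw [← h, he] at hv₀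
        exact hv₀ (hymem s)
      · intro h
        exact hne ((hp i).getVert_injOn (by simpa using hj) (by simp) (by rw [h]; simp)))
    (by
      intro i
      rw [hend]
      exact hysurj _ (haC i))
    (fun s hs => hv₀ (hs ▸ hymem s))
    (by
      intro w
      rcases hverts w with h | ⟨i, h⟩
      · exact Or.inl (hysurj w h)
      · obtain ⟨j, hj, hjl⟩ := Walk.mem_support_iff_exists_getVert.1 h
        exact Or.inr ⟨i, j, hjl, hj.symm⟩)
  let C : Sym2 V → ℕ := fun e => min (col e).1 (k - 1)
  have hC : G.IsKColorConnecting k C := by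
    intro u v huv
    obtain ⟨q, hq, hl⟩ := hcol u v huv
    refine ⟨q, hq, ?_⟩
    have : Finset.range k ⊆ (q.edges.map C).toFinset := by
      intro j hj
      rw [Finset.mem_range] at hj
      obtain ⟨e, he, hce⟩ := hl ⟨j, by omega⟩
      rw [List.mem_toFinset, List.mem_map]
      refine ⟨e, he, ?_⟩
      simp only [C, hce]
      omega
    simpa using Finset.card_le_card this
  have hne : v₀ ≠ x := by
    rintro rfl
    exact hv₀ c.start_mem_support
  have hlow : ∀ c' : Sym2 V → ℕ, G.IsKColorConnecting k c' → k ≤ (c' '' G.edgeSet).ncard := by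
    intro c' hc'
    obtain ⟨q, _, hq⟩ := hc' v₀ x hne
    refine hq.trans ?_
    rw [← Set.ncard_coe_finset]
    refine Set.ncard_le_ncard ?_ (hfin.image _)
    intro j hj
    simp only [List.coe_toFinset, List.mem_map, Set.mem_setOf_eq] at hj
    obtain ⟨e, he, rfl⟩ := hj
    exact ⟨e, q.edges_subset_edgeSet he, rfl⟩
  have hup : (C '' G.edgeSet).ncard ≤ k := by
    have : C '' G.edgeSet ⊆ (Finset.range k : Set ℕ) := by
      rintro _ ⟨e, _, rfl⟩
      simp only [C, Finset.coe_range, Set.mem_Iio]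
      omega
    have := Set.ncard_le_ncard this (Finset.finite_toSet _)
    rwa [Set.ncard_coe_finset, Finset.card_range] at this
  refine ⟨⟨C, hC⟩, ?_⟩
  have hmem : k ∈ {n : ℕ | ∃ c : Sym2 V → ℕ, G.IsKColorConnecting k c ∧
      (c '' G.edgeSet).ncard = n} := ⟨C, hC, le_antisymm hup (hlow C hC)⟩
  apply le_antisymm (Nat.sInf_le hmem)
  obtain ⟨c', hc', he⟩ := Nat.sInf_mem ⟨k, hmem⟩
  rw [← he]
  exact hlow c' hc'
end
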